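/- Let P_n(m) denote the probability that a random EC3 formula on n variables with m clauses (chosen independently and uniformly with replacement from the C(n,3) possible clauses) is satisfiable. Suppose there is a function r*(n) > 0 (a non-uniform threshold) such that for every ε > 0, P_n(⌊ρn⌋) → 1 as n → ∞ whenever ρ < (1−ε)·liminf r*(n) fails to exceed the threshold in the sense ρ ≤ (1−ε)r*(n) for all large n, and P_n(⌊ρn⌋) → 0 whenever ρ ≥ (1+ε)r*(n) for all large n. If for some fixed r > 0 we have liminf_{n→∞} P_n(⌊rn⌋) > 0, then for every fixed r' with 0 < r' < r, lim_{n→∞} P_n(⌊r'n⌋) = 1. -/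

import Mathlib

/-!
The satisfiability probability `P(m) = Psat n m` is nonincreasing in `m`, so it suffices to show that
it cannot stay in an interval `[α, 1 - δ₀]` while `m` runs over a range of length proportional to `n`
(`eventually_boost`). Assume that it does. By averaging, some `m` in the range has one-step drop
`P(m - 1) - P(m) = O(1/n)` and a drop of `O(L/n)` over the next `L` steps (`exists_small_drop`).

*Lower bound.* Expose the clauses of a random formula with `m` clauses one at a time, and let `A(s)` be
the variance of the conditional probability of satisfiability given the first `s` clauses. Since this
probability does not depend on the order of the clauses, the Cauchy-Schwarz inequality makes `A`
log-convex in a suitable sense (`mom_logconvex`). Its last value `A(m) = P(m) (1 - P(m))` is bounded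
below and its last increment is at most the one-step drop, so `A(t) ≥ c (t/m)^k` for a constant `k`:
the variance decays only polynomially (`poly_decay`, `mom_gm_lower`).

*Upper bound.* Averaging over the window of `L` further steps (`mom_gm_le`), the variance `A(t)` is at
most of the order of `∑_{s < t} E Q²` plus the drop over the window (`mom_hm_upper`), where `Q` is the
influence of one random clause `c` on a random formula `y` with `s < t ≪ n` clauses, namely the
probability that the remaining clauses leave `y` satisfiable but not `y` together with `c`. There are
three cases.

* If `c` lies in a small union of components of `y` which is satisfiable together with `c`, then
  adding `c` is no more harmful than pinning boundedly many variables that do not occur in the other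
  clauses of `y`. If a proportion `x` of all variables cannot take a certain value, a random clause
  falls among these variables, and is then violated, with probability about `x³`; iterating, pinning
  `κ` random variables with an effect `x` is matched by `κ` random clauses with an effect of about
  `x^(3^κ)` (`blow_up`, `drop_of_pins`). But `κ` more clauses have an effect of at most `κ/L` on
  average over the window, so `Q` is small (`Qd_good`).
* The exploration of the component of `c` in `y` may be long. By symmetry, each clause of it belongs
  to the first `s` clauses with probability about `s/m ≪ 1`, so this is rare even given that `c` is
  influential (`expect_long`).
* Otherwise the neighbourhood of `c` in `y` is small and unsatisfiable with `c`. A minimal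
  unsatisfiable formula with `j + 1` clauses has at most `2 j + 1` variables (`card_vars_lt`), and the
  probability that `j` clauses of `y` form such a configuration with `c` is `O(n⁻²)`
  (`expect_tangled`).

With `b ≈ n^(1/K)` for a large constant `K`, `t ≈ n / b²` and `L ≈ n / b^(2k+1)`, the bounds
(`variance_sandwich`) read `c b^(-2k) ≤ A(t) ≤ C b^(-2k-1)`, which is impossible for large `n`.
-/

open Filter Topology

/-- A clause of an EC3 (Positive 1-in-3 SAT) formula on `n` variables:
a 3-element subset of the variables. -/
def EC3Clause (n : ℕ) := {c : Finset (Fin n) // c.card = 3}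

/-- An assignment satisfies a clause if exactly one of its variables is true. -/
def ClauseSat {n : ℕ} (σ : Fin n → Bool) (c : Finset (Fin n)) : Prop :=
  (c.filter fun v => σ v = true).card = 1

/-- A formula (a length-`m` tuple of clauses, i.e. a multiset of clauses with
multiplicity recorded by indices) is satisfiable if some assignment satisfies
every clause. -/
def FormulaSatisfiable {n m : ℕ} (φ : Fin m → EC3Clause n) : Prop :=
  ∃ σ : Fin n → Bool, ∀ i : Fin m, ClauseSat σ (φ i).1

/-- The probability that a random EC3 formula on `n` variables with `m` clauses,
each chosen independently and uniformly with replacement among the `C(n,3)`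
possible clauses, is satisfiable. -/
noncomputable def Psat (n m : ℕ) : ℝ :=
  (Nat.card {φ : Fin m → EC3Clause n // FormulaSatisfiable φ} : ℝ) /
    (Nat.card (Fin m → EC3Clause n) : ℝ)

open scoped BigOperators

namespace EC3

/-! ### Averages over random clauses -/

noncomputable instance instFintypeClause (n : ℕ) : Fintype (EC3Clause n) :=
  inferInstanceAs (Fintype {c : Finset (Fin n) // c.card = 3})

noncomputable instance instDecidableEqClause (n : ℕ) : DecidableEq (EC3Clause n) :=
  Classical.decEq _

/-- The set of assignments satisfying a clause. -/
def sat {n : ℕ} (c : EC3Clause n) : Set (Fin n → Bool) := {σ | ClauseSat σ c.1}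

/-- The set of assignments satisfying all clauses of a formula. -/
def sol {n : ℕ} {ι : Type*} (x : ι → EC3Clause n) : Set (Fin n → Bool) :=
  {σ | ∀ i, ClauseSat σ (x i).1}

open Classical in
/-- The `{0, 1}`-valued indicator of non-emptiness of a set of assignments. -/
noncomputable def ne {n : ℕ} (S : Set (Fin n → Bool)) : ℝ := if S.Nonempty then 1 else 0

/-- The probability that some assignment in `S` satisfies `j` independent uniform clauses. -/
noncomputable def p {n : ℕ} : ℕ → Set (Fin n → Bool) → ℝ
  | 0, S => ne S
  | j + 1, S => Finset.expect Finset.univ fun c : EC3Clause n => p j (S ∩ sat c)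

open Finset

theorem card_clause (n : ℕ) : Fintype.card (EC3Clause n) = n.choose 3 := by
  have : Fintype.card {c : Finset (Fin n) // c.card = 3} = n.choose 3 := by
    rw [Fintype.card_finset_len, Fintype.card_fin]
  exact this

theorem nonempty_clause {n : ℕ} (hn : 3 ≤ n) : Nonempty (EC3Clause n) := by
  rw [← Fintype.card_pos_iff, card_clause]
  exact Nat.choose_pos hn

section

variable {n : ℕ}

theorem ne_nonneg (S : Set (Fin n → Bool)) : 0 ≤ ne S := by
  unfold ne; split_ifs <;> norm_num

theorem ne_le_one (S : Set (Fin n → Bool)) : ne S ≤ 1 := by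
  unfold ne; split_ifs <;> norm_num

theorem ne_mono {S T : Set (Fin n → Bool)} (h : S ⊆ T) : ne S ≤ ne T := by
  unfold ne
  by_cases hS : S.Nonempty
  · simp [hS, hS.mono h]
  · simp only [hS, if_false]; split_ifs <;> norm_num

theorem ne_of_nonempty {S : Set (Fin n → Bool)} (h : S.Nonempty) : ne S = 1 := by
  simp [ne, h]

theorem ne_of_not_nonempty {S : Set (Fin n → Bool)} (h : ¬ S.Nonempty) : ne S = 0 := by
  simp [ne, h]

theorem p_succ (j : ℕ) (S : Set (Fin n → Bool)) :
    p (j + 1) S = 𝔼 c : EC3Clause n, p j (S ∩ sat c) := rfl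

theorem p_zero (S : Set (Fin n → Bool)) : p 0 S = ne S := rfl

theorem p_nonneg (j : ℕ) (S : Set (Fin n → Bool)) : 0 ≤ p j S := by
  induction j generalizing S with
  | zero => exact ne_nonneg S
  | succ j ih => rw [p_succ]; exact expect_nonneg fun c _ => ih _

theorem p_mono (j : ℕ) {S T : Set (Fin n → Bool)} (h : S ⊆ T) : p j S ≤ p j T := by
  induction j generalizing S T with
  | zero => exact ne_mono h
  | succ j ih =>
    rw [p_succ, p_succ]
    exact expect_le_expect fun c _ => ih (Set.inter_subset_inter_left _ h)

theorem p_empty (j : ℕ) : p j (∅ : Set (Fin n → Bool)) = 0 := by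
  induction j with
  | zero => exact ne_of_not_nonempty (by simp)
  | succ j ih => rw [p_succ]; simp [ih]

variable [Nonempty (EC3Clause n)]

theorem p_succ_le (j : ℕ) (S : Set (Fin n → Bool)) : p (j + 1) S ≤ p j S := by
  rw [p_succ]
  exact expect_le univ_nonempty fun c _ => p_mono j Set.inter_subset_left

theorem p_anti {i j : ℕ} (h : i ≤ j) (S : Set (Fin n → Bool)) : p j S ≤ p i S := by
  induction j, h using Nat.le_induction with
  | base => exact le_rfl
  | succ j _ ih => exact (p_succ_le j S).trans ih

theorem p_le_ne (j : ℕ) (S : Set (Fin n → Bool)) : p j S ≤ ne S := p_anti (Nat.zero_le j) S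

theorem p_le_one (j : ℕ) (S : Set (Fin n → Bool)) : p j S ≤ 1 := (p_le_ne j S).trans (ne_le_one S)

end

/-! ### Product structure of the space of formulas -/

section

variable {n : ℕ}

theorem sol_insertNth {s : ℕ} (i : Fin (s + 1)) (c : EC3Clause n) (y : Fin s → EC3Clause n) :
    sol (i.insertNth c y : Fin (s + 1) → EC3Clause n) = sol y ∩ sat c := by
  ext σ
  simp only [sol, sat, Set.mem_ofPred_eq, Set.mem_inter_iff]
  rw [Fin.forall_iff_succAbove i]
  simp [and_comm]

theorem expect_insertNth {α : Type*} [Fintype α] {s : ℕ} (i : Fin (s + 1))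
    (φ : (Fin (s + 1) → α) → ℝ) :
    𝔼 x, φ x = 𝔼 y : Fin s → α, 𝔼 c : α, φ (i.insertNth c y) := by
  rw [expect_comm, ← Finset.expect_product' (f := fun (c : α) (y : Fin s → α) => φ (i.insertNth c y)), univ_product_univ]
  exact (Fintype.expect_equiv (Fin.insertNthEquiv (fun _ => α) i) _ _ fun _ => rfl).symm

theorem sol_fin_zero (x : Fin 0 → EC3Clause n) : sol x = Set.univ := by
  ext σ; simp [sol]

/-- Exposing the first `s` clauses of `s + j` random clauses. -/
theorem expect_p (s j : ℕ) (S : Set (Fin n → Bool)) :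
    𝔼 x : Fin s → EC3Clause n, p j (S ∩ sol x) = p (s + j) S := by
  induction s generalizing j with
  | zero => simp [sol_fin_zero]
  | succ s ih =>
    rw [expect_insertNth 0, show s + 1 + j = s + (j + 1) by ring, ← ih (j + 1)]
    refine expect_congr rfl fun y _ => ?_
    rw [p_succ]
    refine expect_congr rfl fun c _ => ?_
    rw [sol_insertNth, Set.inter_assoc]

theorem p_eq_expect (j : ℕ) (S : Set (Fin n → Bool)) :
    p j S = 𝔼 G : Fin j → EC3Clause n, ne (S ∩ sol G) := by
  have := expect_p (n := n) j 0 S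
  simpa [p_zero] using this.symm

theorem Psat_eq (m : ℕ) : Psat n m = p m (Set.univ : Set (Fin n → Bool)) := by
  classical
  rw [p_eq_expect, Finset.expect_eq_sum_div_card, Psat]
  congr 1
  · rw [Nat.card_eq_fintype_card, Fintype.card_subtype]
    simp only [ne, Set.univ_inter]
    rw [Finset.sum_boole]
    rfl
  · rw [Nat.card_eq_fintype_card, card_univ]

/-- Jensen's inequality for powers. -/
theorem expect_pow_le {ι : Type*} (s : Finset ι) (hs : s.Nonempty) (f : ι → ℝ)
    (hf : ∀ i ∈ s, 0 ≤ f i) (N : ℕ) : (𝔼 i ∈ s, f i) ^ N ≤ 𝔼 i ∈ s, f i ^ N := by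
  have hc : (0 : ℝ) < s.card := by exact_mod_cast hs.card_pos
  have := Real.pow_arith_mean_le_arith_mean_pow s (fun _ => (s.card : ℝ)⁻¹) f
    (fun _ _ => by positivity) (by simp [hc.ne']) hf N
  rw [expect_eq_sum_div_card, expect_eq_sum_div_card, div_eq_inv_mul, div_eq_inv_mul]
  rwa [← Finset.mul_sum, ← Finset.mul_sum] at this

end

/-! ### Second moments of exposure martingales -/

/-- Second moment of the `s`-th term of the exposure martingale `g`. -/
noncomputable def mom {n : ℕ} (g : ℕ → Set (Fin n → Bool) → ℝ) (s : ℕ) : ℝ :=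
  𝔼 x : Fin s → EC3Clause n, g s (sol x) ^ 2

/-- The martingale relation for `g` at time `s`. -/
def Mart {n : ℕ} (g : ℕ → Set (Fin n → Bool) → ℝ) (s : ℕ) : Prop :=
  ∀ S, g s S = 𝔼 c : EC3Clause n, g (s + 1) (S ∩ sat c)

section

variable {n : ℕ} {g : ℕ → Set (Fin n → Bool) → ℝ}

theorem mom_nonneg (s : ℕ) : 0 ≤ mom g s := expect_nonneg fun _ _ => sq_nonneg _

theorem sol_removeNth {s : ℕ} (j : Fin (s + 1)) (x : Fin (s + 1) → EC3Clause n) :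
    sol (j.removeNth x) = {σ | ∀ k, k ≠ j → ClauseSat σ (x k).1} := by
  ext σ
  simp only [sol, Set.mem_ofPred_eq]
  rw [Fin.forall_iff_succAbove (P := fun k => k ≠ j → ClauseSat σ (x k).1) j]
  simp [Fin.removeNth, Fin.succAbove_ne]

theorem expect_cross_self {s : ℕ} (h : Mart g s) (i : Fin (s + 1)) :
    𝔼 x : Fin (s + 1) → EC3Clause n, g (s + 1) (sol x) * g s (sol (i.removeNth x)) = mom g s := by
  rw [expect_insertNth i, mom]
  refine expect_congr rfl fun y _ => ?_
  simp only [Fin.removeNth_insertNth, sol_insertNth]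
  rw [← expect_mul, ← h, sq]

/-- Removing two different clauses in turn gives conditionally independent terms, whose product averages
to the second moment one step earlier. -/
theorem expect_cross_ne {s : ℕ} (h : Mart g s) {i j : Fin (s + 2)} (hij : i ≠ j) :
    𝔼 x : Fin (s + 2) → EC3Clause n,
      g (s + 1) (sol (i.removeNth x)) * g (s + 1) (sol (j.removeNth x)) = mom g s := by
  obtain ⟨j', rfl⟩ := Fin.exists_succAbove_eq hij.symm
  rw [expect_insertNth i, expect_insertNth j', mom]
  refine expect_congr rfl fun z _ => ?_
  have key : ∀ c d : EC3Clause n, sol ((i.succAbove j').removeNth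
      (i.insertNth c (j'.insertNth d z : Fin (s + 1) → EC3Clause n) :
        Fin (s + 2) → EC3Clause n)) = sol z ∩ sat c := by
    intro c d
    rw [sol_removeNth]
    ext σ
    simp only [Set.mem_ofPred_eq, Set.mem_inter_iff, sol, sat]
    rw [Fin.forall_iff_succAbove i, Fin.forall_iff_succAbove j']
    simp [hij, Fin.succAbove_ne, and_comm]
  simp only [key, Fin.removeNth_insertNth, sol_insertNth]
  have h2 : ∀ S, 𝔼 c, g (s + 1) (S ∩ sat c) = g s S := fun S => (h S).symm
  simp_rw [← mul_expect, h2, ← expect_mul, h2]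
  rw [sq]

theorem expect_self {s : ℕ} [Nonempty (EC3Clause n)] (i : Fin (s + 1)) :
    𝔼 x : Fin (s + 1) → EC3Clause n,
      g s (sol (i.removeNth x)) * g s (sol (i.removeNth x)) = mom g s := by
  rw [expect_insertNth i, mom]
  refine expect_congr rfl fun y _ => ?_
  simp only [Fin.removeNth_insertNth]
  rw [Fintype.expect_const, sq]

theorem expect_cauchy {α : Type*} [Fintype α] (u v : α → ℝ) :
    (𝔼 x, u x * v x) ^ 2 ≤ (𝔼 x, u x ^ 2) * 𝔼 x, v x ^ 2 := by
  simp only [expect_eq_sum_div_card]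
  rw [div_mul_div_comm, div_pow, ← sq]
  gcongr
  exact sum_mul_sq_le_sq_mul_sq _ _ _

/-- Log-convexity of the second moments of a symmetric martingale, from the Cauchy-Schwarz
inequality applied to `g (s + 2)` and the average of its conditional expectations given all
clauses but one. -/
theorem mom_logconvex [Nonempty (EC3Clause n)] {s : ℕ} (h : Mart g s) (h' : Mart g (s + 1)) :
    ((s : ℝ) + 2) * mom g (s + 1) ^ 2
      ≤ mom g (s + 2) * (mom g (s + 1) + ((s : ℝ) + 1) * mom g s) := by
  have c := expect_cauchy (fun x : Fin (s + 2) → EC3Clause n => g (s + 2) (sol x))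
    (fun x : Fin (s + 2) → EC3Clause n => ∑ i : Fin (s + 2), g (s + 1) (sol (i.removeNth x)))
  have e1 : 𝔼 x : Fin (s + 2) → EC3Clause n,
      g (s + 2) (sol x) * ∑ i : Fin (s + 2), g (s + 1) (sol (i.removeNth x)) = (s + 2) * mom g (s + 1) := by
    simp_rw [mul_sum]
    rw [expect_sum_comm]
    simp_rw [expect_cross_self h']
    simp
  have e2 : 𝔼 x : Fin (s + 2) → EC3Clause n, (∑ i : Fin (s + 2), g (s + 1) (sol (i.removeNth x))) ^ 2
      = (s + 2) * (mom g (s + 1) + (s + 1) * mom g s) := by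
    simp_rw [sq, sum_mul_sum]
    rw [expect_sum_comm]
    have : ∀ i : Fin (s + 2), 𝔼 x : Fin (s + 2) → EC3Clause n,
        ∑ j : Fin (s + 2), g (s + 1) (sol (i.removeNth x)) * g (s + 1) (sol (j.removeNth x))
        = mom g (s + 1) + (s + 1) * mom g s := by
      intro i
      rw [expect_sum_comm, Fin.sum_univ_succAbove _ i, expect_self]
      congr 1
      rw [sum_congr rfl fun j _ => expect_cross_ne h (Fin.succAbove_ne i j).symm]
      simp
    simp_rw [this]
    simp
    ring
  rw [e1, e2] at c
  have hs : (0 : ℝ) < s + 2 := by positivity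
  rw [mom] at c ⊢
  rw [mom]
  have : (s + 2 : ℝ) * ((s + 2) * mom g (s + 1) ^ 2)
      ≤ (s + 2) * (mom g (s + 2) * (mom g (s + 1) + (s + 1) * mom g s)) := by
    simp only [mom] at c ⊢
    nlinarith [c]
  exact le_of_mul_le_mul_left this hs

/-- The increment of the second moments is a mean conditional variance, which is at most the mean
squared deviation from any quantity `b` known before the clause is exposed. -/
theorem mom_succ_sub_le [Nonempty (EC3Clause n)] {s : ℕ} (h : Mart g s)
    (b : Set (Fin n → Bool) → ℝ) :
    mom g (s + 1) - mom g s ≤ 𝔼 y : Fin s → EC3Clause n, 𝔼 c : EC3Clause n,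
      (b (sol y) - g (s + 1) (sol y ∩ sat c)) ^ 2 := by
  rw [mom, mom, expect_insertNth 0, ← expect_sub_distrib]
  refine expect_le_expect fun y _ => ?_
  simp only [sol_insertNth]
  set w := fun c : EC3Clause n => g (s + 1) (sol y ∩ sat c) with hw
  have hm : g s (sol y) = 𝔼 c, w c := h _
  have : 𝔼 c, (b (sol y) - w c) ^ 2
      = b (sol y) ^ 2 - 2 * b (sol y) * 𝔼 c, w c + 𝔼 c, w c ^ 2 := by
    rw [mul_expect, ← Fintype.expect_const (ι := EC3Clause n) (b (sol y) ^ 2),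
      ← expect_sub_distrib, ← expect_add_distrib]
    refine expect_congr rfl fun c _ => ?_
    ring
  change 𝔼 c, w c ^ 2 - _ ≤ 𝔼 c, (b (sol y) - w c) ^ 2
  rw [this, hm]
  nlinarith [sq_nonneg (b (sol y) - 𝔼 c, w c)]

end

/-- A sequence satisfying the log-convexity inequality whose last relative increment is at most
`ρ / m` decays at most polynomially when going down from `m`. -/
theorem poly_decay {A : ℕ → ℝ} {m k : ℕ} {ρ : ℝ} (hm : 0 < A m)
    (hk : 2 * ρ ≤ k) (hk1 : 1 ≤ k)
    (hlc : ∀ s, s + 2 ≤ m →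
      ((s : ℝ) + 2) * A (s + 1) ^ 2 ≤ A (s + 2) * (A (s + 1) + ((s : ℝ) + 1) * A s))
    (hlast : (m : ℝ) * (A m - A (m - 1)) ≤ ρ * A m) {t : ℕ} (ht : k ≤ t) (htm : t ≤ m) :
    A m * ((t : ℝ) / m) ^ k ≤ A t := by
  have main : ∀ d, ∀ t, t + d = m → k ≤ t →
      (t : ℝ) * (A t - A (t - 1)) ≤ ρ * A t ∧ 0 < A t ∧ A m * ((t : ℝ) / m) ^ k ≤ A t := by
    intro d
    induction d with
    | zero =>
      intro t h hkt
      obtain rfl : t = m := by omega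
      refine ⟨hlast, hm, ?_⟩
      have : (t : ℝ) ≠ 0 := by
        have : 0 < t := by omega
        positivity
      rw [div_self this]; simp
    | succ d ih =>
      intro t h hkt
      obtain ⟨h1, h2, h3⟩ := ih (t + 1) (by omega) (by omega)
      simp only [Nat.add_sub_cancel] at h1
      push_cast at h1 h3
      have hkt' : (k : ℝ) ≤ t := by exact_mod_cast hkt
      have hk1' : (1 : ℝ) ≤ k := by exact_mod_cast hk1
      have htpos : (0 : ℝ) < t := by linarith
      have hstep : (1 - ρ / (t + 1)) * A (t + 1) ≤ A t := by
        rw [← sub_nonneg]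
        have : A t - (1 - ρ / (t + 1)) * A (t + 1)
          = (ρ * A (t + 1) - (t + 1) * (A (t + 1) - A t)) / (t + 1) := by
          field_simp; ring
        rw [this]; exact div_nonneg (by linarith) (by positivity)
      have hfac : ((t : ℝ) / (t + 1)) ^ k ≤ 1 - ρ / (t + 1) := by
        set y : ℝ := 1 / (t + 1) with hy
        have hy0 : 0 < y := by positivity
        have e1 : (t : ℝ) / (t + 1) = 1 - y := by rw [hy]; field_simp; ring
        have hky : (k : ℝ) * y ≤ 1 := by
          rw [hy, mul_one_div, div_le_one (by positivity)]; linarith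
        have hy1 : y ≤ 1 := by nlinarith
        have b1 : 1 + (k : ℝ) * y ≤ (1 + y) ^ k := one_add_mul_le_pow (by linarith) k
        have b2 : (1 - y) ^ k * (1 + y) ^ k ≤ 1 := by
          rw [← mul_pow]
          exact pow_le_one₀ (by nlinarith) (by nlinarith)
        have b0 : 0 ≤ (1 - y) ^ k := pow_nonneg (by linarith) k
        have b3 : (1 - y) ^ k * (1 + k * y) ≤ 1 :=
          (mul_le_mul_of_nonneg_left b1 b0).trans b2
        have b4 : (1 - y) ^ k ≤ 1 - k * y / 2 := by
          have hz : 0 < 1 + (k : ℝ) * y := by positivity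
          have : 1 ≤ (1 - k * y / 2) * (1 + k * y) := by nlinarith [mul_nonneg (by positivity : 0 ≤ (k:ℝ) * y) (sub_nonneg.2 hky)]
          exact le_of_mul_le_mul_right (b3.trans this) hz
        rw [e1]
        refine b4.trans ?_
        have : ρ / (t + 1) = ρ * y := by rw [hy, mul_one_div]
        rw [this]; nlinarith
      have hfpos : 0 < ((t : ℝ) / (t + 1)) ^ k := by positivity
      have hAt : 0 < A t := lt_of_lt_of_le (mul_pos (hfpos.trans_le hfac) h2) hstep
      refine ⟨?_, hAt, ?_⟩
      · obtain ⟨s, rfl⟩ : ∃ s, t = s + 1 := ⟨t - 1, by omega⟩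
        simp only [Nat.add_sub_cancel]
        push_cast at h1 ⊢
        have hl := hlc s (by omega)
        have h4 : A (s + 2) * (A (s + 1) * (s + 2 - ρ))
            ≤ A (s + 2) * (A (s + 1) + (s + 1) * A s) := by
          refine le_trans ?_ hl
          have : A (s + 2) * (s + 2 - ρ) ≤ (s + 2) * A (s + 1) := by
            have : A (s + 1 + 1) = A (s + 2) := rfl
            rw [this] at h1; linarith
          nlinarith [mul_le_mul_of_nonneg_left this hAt.le]
        have h5 := le_of_mul_le_mul_left h4 h2
        linarith
      · have hm0 : (0 : ℝ) < m := by
          have : 0 < m := by omega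
          exact_mod_cast this
        calc A m * ((t : ℝ) / m) ^ k
            = ((t : ℝ) / (t + 1)) ^ k * (A m * (((t : ℝ) + 1) / m) ^ k) := by
              rw [mul_left_comm, ← mul_pow]
              congr 2; field_simp
          _ ≤ (1 - ρ / (t + 1)) * A (t + 1) :=
              mul_le_mul hfac h3 (by positivity) (hfpos.le.trans hfac)
          _ ≤ A t := hstep
  exact (main (m - t) t (by omega) ht).2.2

/-! ### Pinned variables and the blow-up lemma -/

/-- The set of assignments giving the variable `v` the value `b`. -/
def pin {n : ℕ} (v : Fin n) (b : Bool) : Set (Fin n → Bool) := {σ | σ v = b}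

/-- The average, over independent uniform variables `z₁, …, z_k`, of the probability that some
assignment in `S` with `z₁ = a₁, …, z_k = a_k` satisfies `j` independent uniform clauses. -/
noncomputable def pv {n : ℕ} (j : ℕ) : List Bool → Set (Fin n → Bool) → ℝ
  | [], S => p j S
  | b :: a, S => Finset.expect Finset.univ fun y : Fin n => pv j a (S ∩ pin y b)

/-- The probability that pinning independent uniform variables to the values `a` empties `S`. -/
noncomputable def kv {n : ℕ} (a : List Bool) (S : Set (Fin n → Bool)) : ℝ := 1 - pv 0 a S

section

variable {n : ℕ}

theorem pv_nonneg (j : ℕ) (a : List Bool) (S : Set (Fin n → Bool)) : 0 ≤ pv j a S := by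
  induction a generalizing S with
  | nil => exact p_nonneg j S
  | cons b a ih => exact expect_nonneg fun y _ => ih _

theorem pv_mono (j : ℕ) (a : List Bool) {S T : Set (Fin n → Bool)} (h : S ⊆ T) :
    pv j a S ≤ pv j a T := by
  induction a generalizing S T with
  | nil => exact p_mono j h
  | cons b a ih => exact expect_le_expect fun y _ => ih (Set.inter_subset_inter_left _ h)

theorem pv_eq_expect (j : ℕ) (a : List Bool) (S : Set (Fin n → Bool)) :
    pv j a S = 𝔼 G : Fin j → EC3Clause n, pv 0 a (S ∩ sol G) := by
  induction a generalizing S with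
  | nil => exact p_eq_expect j S
  | cons b a ih =>
    simp only [pv, ih]
    rw [expect_comm]
    refine expect_congr rfl fun y _ => expect_congr rfl fun G _ => ?_
    rw [Set.inter_right_comm]

theorem three_le_of_clause (c : EC3Clause n) : 3 ≤ n := by
  have := card_le_univ c.1
  rw [c.2, Fintype.card_fin] at this
  exact this

/-- A clause all of whose variables may not take the value `b` within `S` is falsified by `S`:
a satisfied clause has both a true and a false variable. -/
theorem inter_sat_empty {S : Set (Fin n → Bool)} {b : Bool} {c : EC3Clause n}
    (h : ∀ v ∈ c.1, ¬ (S ∩ pin v b).Nonempty) : ¬ (S ∩ sat c).Nonempty := by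
  rintro ⟨σ, hS, hc⟩
  have hall : ∀ v ∈ c.1, σ v = !b := by
    intro v hv
    by_contra hne
    exact h v hv ⟨σ, hS, by
      change σ v = b
      cases hb : σ v <;> cases b <;> simp_all⟩
  have hc' : (c.1.filter fun v => σ v = true).card = 1 := hc
  cases b
  · rw [filter_true_of_mem (by simpa using hall), c.2] at hc'
    omega
  · rw [filter_false_of_mem (by intro v hv; simp [hall v hv])] at hc'
    simp at hc'

theorem choose_three (m : ℕ) : (m.choose 3 : ℝ) = m * (m - 1) * (m - 2) / 6 := by
  rcases m with _ | _ | m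
  · simp
  · simp [Nat.choose]
  · have := Nat.descFactorial_eq_factorial_mul_choose (m + 2) 3
    simp [Nat.descFactorial, Nat.factorial] at this
    have h' : ((m : ℝ) * ((m + 1) * (m + 2))) = 6 * ((m + 2).choose 3 : ℝ) := by
      exact_mod_cast this
    push_cast
    linarith

theorem choose_three_bound {k n : ℕ} (hn : 3 ≤ n) (hk : k ≤ n) :
    ((k : ℝ) / n) ^ 3 - 3 / n ≤ (k.choose 3 : ℝ) / n.choose 3 := by
  have h6 := choose_three
  have hn' : (3 : ℝ) ≤ n := by exact_mod_cast hn
  have hk' : (k : ℝ) ≤ n := by exact_mod_cast hk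
  have hk0 : (0 : ℝ) ≤ k := by positivity
  rw [h6, h6, div_div_div_cancel_right₀ (by norm_num)]
  have hd : 0 < (n : ℝ) * (n - 1) * (n - 2) :=
    mul_pos (mul_pos (by linarith) (by linarith)) (by linarith)
  have hnum : 0 ≤ (k : ℝ) * (k - 1) * (k - 2) := by
    have := h6 k
    have h2 : (0 : ℝ) ≤ (k.choose 3 : ℝ) := by positivity
    rw [this] at h2; linarith
  have hle : (n : ℝ) * (n - 1) * (n - 2) ≤ n ^ 3 := by nlinarith
  calc ((k : ℝ) / n) ^ 3 - 3 / n = ((k : ℝ) ^ 3 - 3 * (n : ℝ) ^ 2) / (n : ℝ) ^ 3 := by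
        field_simp
    _ ≤ ((k : ℝ) * (k - 1) * (k - 2)) / (n : ℝ) ^ 3 := by
        gcongr
        nlinarith
    _ ≤ _ := by gcongr

theorem pow_sub_pow_le_mul {x y : ℝ} (hy : 0 ≤ y) (hx : x ≤ 1) (hyx : y ≤ x) (N : ℕ) :
    x ^ N - y ^ N ≤ N * (x - y) := by
  induction N with
  | zero => simp
  | succ N ih =>
    have h1 : x ^ N ≤ 1 := pow_le_one₀ (hy.trans hyx) hx
    have h2 : x ^ (N + 1) - y ^ (N + 1) = x ^ N * (x - y) + y * (x ^ N - y ^ N) := by ring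
    have h3 : y ^ N ≤ x ^ N := pow_le_pow_left₀ hy hyx N
    push_cast
    nlinarith

variable [Nonempty (EC3Clause n)]

theorem three_le : 3 ≤ n := three_le_of_clause (Classical.arbitrary (EC3Clause n))

theorem pv_le (j : ℕ) (a : List Bool) (S : Set (Fin n → Bool)) : pv j a S ≤ p j S := by
  have : Nonempty (Fin n) := ⟨⟨0, by have := three_le (n := n); omega⟩⟩
  induction a generalizing S with
  | nil => exact le_rfl
  | cons b a ih =>
    exact expect_le univ_nonempty fun y _ => (ih _).trans (p_mono j Set.inter_subset_left)

theorem kv_nonneg (a : List Bool) (S : Set (Fin n → Bool)) : 0 ≤ kv a S :=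
  sub_nonneg.2 ((pv_le 0 a S).trans (p_le_one 0 S))

theorem kv_cons (b : Bool) (a : List Bool) (S : Set (Fin n → Bool)) :
    kv (b :: a) S = 𝔼 y : Fin n, kv a (S ∩ pin y b) := by
  have : Nonempty (Fin n) := ⟨⟨0, by have := three_le (n := n); omega⟩⟩
  simp only [kv]
  rw [expect_sub_distrib, Fintype.expect_const]
  rfl

/-- If pinning a random variable to `b` empties `S` with probability `x`, a random clause falls among
the variables that cannot take the value `b` in `S` with probability about `x ^ 3`, and then it empties
`S`. -/
theorem kill_cube_base (b : Bool) (S : Set (Fin n → Bool)) :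
    (𝔼 y : Fin n, kv [] (S ∩ pin y b)) ^ 3 - 3 / n ≤ 𝔼 c : EC3Clause n, kv [] (S ∩ sat c) := by
  classical
  set K : Finset (Fin n) := univ.filter fun y => ¬ (S ∩ pin y b).Nonempty with hK
  have e0 : ∀ T : Set (Fin n → Bool), kv [] T = if ¬ T.Nonempty then 1 else 0 := by
    intro T
    simp only [kv, pv, p_zero, ne]
    split_ifs <;> simp_all
  have e1 : 𝔼 y : Fin n, kv [] (S ∩ pin y b) = (K.card : ℝ) / n := by
    rw [expect_eq_sum_div_card]
    simp only [e0]
    rw [Finset.sum_boole, card_univ, Fintype.card_fin]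
  have hKn : K.card ≤ n := by simpa using card_le_univ K
  have e2 : (K.card.choose 3 : ℝ) / n.choose 3 ≤ 𝔼 c : EC3Clause n, kv [] (S ∩ sat c) := by
    rw [expect_eq_sum_div_card, card_univ, card_clause]
    gcongr
    simp only [e0]
    rw [Finset.sum_boole]
    norm_cast
    rw [← card_powersetCard]
    refine Finset.card_le_card_of_surjOn (fun c : EC3Clause n => c.1) ?_
    intro c hc
    have hc' := mem_powersetCard.1 (by simpa using hc : c ∈ powersetCard 3 K)
    refine ⟨⟨c, hc'.2⟩, ?_, rfl⟩
    simp only [coe_filter, mem_univ, true_and]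
    refine inter_sat_empty (b := b) fun v hv => ?_
    exact (mem_filter.1 (hc'.1 hv)).2
  rw [e1]
  exact (choose_three_bound three_le hKn).trans e2

/-- The trade of one pinned variable for one random clause, in the presence of further pinned
variables. -/
theorem kill_cube (b : Bool) (a : List Bool) (S : Set (Fin n → Bool)) :
    (𝔼 y : Fin n, kv a (S ∩ pin y b)) ^ 3 - 3 / n ≤ 𝔼 c : EC3Clause n, kv a (S ∩ sat c) := by
  have hne : Nonempty (Fin n) := ⟨⟨0, by have := three_le (n := n); omega⟩⟩
  induction a generalizing S with
  | nil => exact kill_cube_base b S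
  | cons d a ih =>
    simp only [kv_cons]
    rw [expect_comm, expect_comm (f := fun (c : EC3Clause n) y => kv a (S ∩ sat c ∩ pin y d))]
    calc _ ≤ 𝔼 z : Fin n, (𝔼 y : Fin n, kv a (S ∩ pin y b ∩ pin z d)) ^ 3 - 3 / n :=
          sub_le_sub_right (expect_pow_le univ univ_nonempty _
            (fun z _ => expect_nonneg fun y _ => kv_nonneg _ _) 3) _
      _ = 𝔼 z : Fin n, ((𝔼 y : Fin n, kv a (S ∩ pin z d ∩ pin y b)) ^ 3 - 3 / n) := by
          rw [expect_sub_distrib, Fintype.expect_const]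
          simp only [Set.inter_right_comm]
      _ ≤ 𝔼 z : Fin n, 𝔼 c : EC3Clause n, kv a (S ∩ pin z d ∩ sat c) :=
          expect_le_expect fun z _ => ih _
      _ = _ := by simp only [Set.inter_right_comm]

/-- If pinning `k` random variables kills `S` with probability `x`, then adding `k` random clauses
kills `S` with probability about `x ^ (3 ^ k)` at least. -/
theorem blow_up (a : List Bool) (S : Set (Fin n → Bool)) :
    kv a S ^ 3 ^ a.length - 3 ^ (a.length + 1) / n ≤ 1 - p a.length S := by
  have hne : Nonempty (Fin n) := ⟨⟨0, by have := three_le (n := n); omega⟩⟩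
  have hn : (0 : ℝ) < n := by have := three_le (n := n); positivity
  induction a generalizing S with
  | nil =>
    simp only [List.length_nil, pow_zero, pow_one, kv, pv]
    have : (0 : ℝ) ≤ 3 ^ (0 + 1) / n := by positivity
    linarith
  | cons b a ih =>
    have hle : ∀ T : Set (Fin n → Bool), kv a T ≤ 1 := fun T => by
      simpa [kv] using pv_nonneg 0 a T
    set X := 𝔼 c : EC3Clause n, kv a (S ∩ sat c) with hX
    set x := kv (b :: a) S with hx
    set N := 3 ^ a.length with hN
    have hX0 : 0 ≤ X := expect_nonneg fun _ _ => kv_nonneg _ _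
    have hx0 : 0 ≤ x := kv_nonneg _ _
    have hx1 : x ≤ 1 := by simpa [hx, kv] using pv_nonneg 0 (b :: a) S
    have h1 : x ^ 3 - 3 / n ≤ X := by
      rw [hx, kv_cons]; exact kill_cube b a S
    have h2 : X ^ N - 3 ^ (a.length + 1) / n ≤ 1 - p (a.length + 1) S := by
      calc X ^ N - 3 ^ (a.length + 1) / n
          ≤ (𝔼 c : EC3Clause n, kv a (S ∩ sat c) ^ N) - 3 ^ (a.length + 1) / n :=
            sub_le_sub_right (expect_pow_le univ univ_nonempty _ (fun _ _ => kv_nonneg _ _) N) _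
        _ = 𝔼 c : EC3Clause n, (kv a (S ∩ sat c) ^ N - 3 ^ (a.length + 1) / n) := by
            rw [expect_sub_distrib, Fintype.expect_const]
        _ ≤ 𝔼 c : EC3Clause n, (1 - p a.length (S ∩ sat c)) := expect_le_expect fun c _ => ih _
        _ = 1 - p (a.length + 1) S := by
            rw [expect_sub_distrib, Fintype.expect_const, p_succ]
    have h3 : (x ^ 3) ^ N - X ^ N ≤ N * (3 / n) := by
      rcases le_total (x ^ 3) X with h | h
      · have := pow_le_pow_left₀ (by positivity) h N
        have : (0 : ℝ) ≤ N * (3 / n) := by positivity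
        linarith
      · refine (pow_sub_pow_le_mul hX0 (pow_le_one₀ hx0 hx1) h N).trans ?_
        gcongr
        linarith
    have e1 : x ^ 3 ^ (a.length + 1) = (x ^ 3) ^ N := by
      rw [← pow_mul, hN, pow_succ' 3]
    have e2 : (N : ℝ) * (3 / n) = 3 ^ (a.length + 1) / n := by
      rw [hN]; push_cast; ring
    have e3 : (3 : ℝ) ^ (a.length + 1 + 1) / n = 3 * (3 ^ (a.length + 1) / n) := by
      rw [pow_succ]; ring
    have e4 : (0 : ℝ) ≤ 3 ^ (a.length + 1) / n := by positivity
    simp only [List.length_cons]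
    rw [e1, e3]
    rw [e2] at h3
    linarith

end

/-! ### Exchangeability of unconstrained variables -/

section

variable {n : ℕ}

/-- The clause obtained by renaming variables. -/
def ren (π : Equiv.Perm (Fin n)) (c : EC3Clause n) : EC3Clause n :=
  ⟨c.1.map π.toEmbedding, by rw [card_map]; exact c.2⟩

theorem clauseSat_ren (π : Equiv.Perm (Fin n)) (c : EC3Clause n) (σ : Fin n → Bool) :
    ClauseSat σ (ren π c).1 ↔ ClauseSat (σ ∘ π) c.1 := by
  simp only [ClauseSat, ren, filter_map, card_map]
  rfl

theorem p_ren (j : ℕ) (π : Equiv.Perm (Fin n)) (S : Set (Fin n → Bool)) :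
    p j {σ | σ ∘ π ∈ S} = p j S := by
  induction j generalizing S with
  | zero =>
    simp only [p_zero, ne]
    congr 1
    refine propext ⟨fun ⟨σ, h⟩ => ⟨_, h⟩, fun ⟨σ, h⟩ => ⟨σ ∘ π.symm, ?_⟩⟩
    simpa [Function.comp_assoc] using h
  | succ j ih =>
    rw [p_succ, p_succ]
    refine (Fintype.expect_bijective (ren π) ?_ _ _ fun c => ?_).symm
    · rw [Fintype.bijective_iff_injective_and_card]
      refine ⟨fun c d h => ?_, rfl⟩
      have : c.1.map π.toEmbedding = d.1.map π.toEmbedding := congrArg Subtype.val h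
      exact Subtype.ext (map_injective _ this)
    · rw [← ih]
      congr 1
      ext σ
      simp only [Set.mem_ofPred_eq, Set.mem_inter_iff, sat, clauseSat_ren]

/-- The set of assignments with prescribed values at listed variables. -/
def pins (q : List (Fin n × Bool)) : Set (Fin n → Bool) := {σ | ∀ e ∈ q, σ e.1 = e.2}

/-- `S` is invariant under exchanging variables of `U`. -/
def Exch (U : Finset (Fin n)) (S : Set (Fin n → Bool)) : Prop :=
  ∀ x ∈ U, ∀ y ∈ U, ∀ σ, σ ∘ Equiv.swap x y ∈ S ↔ σ ∈ S

/-- Pinning random variables is, up to a constant factor, at least as effective as pinning given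
exchangeable ones. -/
theorem pv_exch [Nonempty (EC3Clause n)] (j : ℕ) (C : ℝ) (q : List (Fin n × Bool))
    (U : Finset (Fin n)) (S : Set (Fin n → Bool)) (hS : Exch U S) (hC : p j S ≤ C)
    (hq : (q.map Prod.fst).Nodup) (hqU : ∀ e ∈ q, e.1 ∈ U) (hU : n + 4 * q.length ≤ 4 * U.card) :
    (1 / 4 : ℝ) ^ q.length * (C - p j (S ∩ pins q)) ≤ C - pv j (q.map Prod.snd) S := by
  have hne : Nonempty (Fin n) := ⟨⟨0, by have := three_le (n := n); omega⟩⟩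
  have hn : (0 : ℝ) < n := by have := three_le (n := n); positivity
  induction hk : q.length generalizing q U S with
  | zero =>
    obtain rfl := List.length_eq_zero_iff.1 hk
    simp [pins, pv]
  | succ k ih =>
    obtain ⟨⟨v, b⟩, q, rfl⟩ := List.exists_cons_of_length_eq_add_one hk
    simp only [List.map_cons, List.nodup_cons] at hq
    have hvU : v ∈ U := hqU (v, b) (by simp)
    simp only [List.length_cons] at hU hk
    have key : ∀ y ∈ U, (1 / 4 : ℝ) ^ k * (C - p j (S ∩ pins ((v, b) :: q)))
        ≤ C - pv j (q.map Prod.snd) (S ∩ pin y b) := by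
      intro y hy
      set τ := Equiv.swap v y with hτ
      set q' := q.map fun e => (τ e.1, e.2) with hq'
      have h1 : p j (S ∩ pins ((v, b) :: q)) = p j (S ∩ pin y b ∩ pins q') := by
        rw [← p_ren j τ]
        congr 1
        ext σ
        simp only [Set.mem_ofPred_eq, Set.mem_inter_iff, pins, pin, hq', List.mem_cons,
          forall_eq_or_imp, List.forall_mem_map, and_assoc]
        rw [hS v hvU y hy σ]
        simp [hτ]
      have h2 : q.map Prod.snd = q'.map Prod.snd := by simp [hq', Function.comp_def]
      have h3 : q'.length = q.length := by simp [hq']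
      have h4 : q'.map Prod.fst = (q.map Prod.fst).map τ := by simp [hq', Function.comp_def]
      rw [h1, h2]
      refine ih q' (U.erase y) (S ∩ pin y b) ?_ ?_ ?_ ?_ ?_ (by omega)
      · intro x hx z hz σ
        have hx' := mem_erase.1 hx
        have hz' := mem_erase.1 hz
        have hy' : Equiv.swap x z y = y :=
          Equiv.swap_apply_of_ne_of_ne (Ne.symm hx'.1) (Ne.symm hz'.1)
        have h6 := hS x hx'.2 z hz'.2 σ
        simp only [Set.mem_inter_iff, pin, Set.mem_ofPred_eq, Function.comp_apply, hy', h6]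
      · exact (p_mono j Set.inter_subset_left).trans hC
      · rw [h4]; exact hq.2.map τ.injective
      · intro e he
        obtain ⟨e', he', rfl⟩ := List.mem_map.1 he
        have hne' : e'.1 ≠ v := fun h => hq.1 (List.mem_map.2 ⟨e', he', h⟩)
        have hU' : e'.1 ∈ U := hqU e' (by simp [he'])
        simp only [mem_erase]
        constructor
        · intro h
          apply hne'
          have : τ (τ e'.1) = τ y := by rw [h]
          simpa [hτ] using this
        · rw [hτ]
          by_cases h : e'.1 = y
          · rw [h, Equiv.swap_apply_right]; exact hvU
          · rw [Equiv.swap_apply_of_ne_of_ne hne' h]; exact hU'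
      · rw [card_erase_of_mem hy]; omega
    set W := C - p j (S ∩ pins ((v, b) :: q)) with hW
    have hW0 : 0 ≤ W := sub_nonneg.2 ((p_mono j Set.inter_subset_left).trans hC)
    have e1 : C - pv j (List.map Prod.snd ((v, b) :: q)) S
        = 𝔼 y : Fin n, (C - pv j (q.map Prod.snd) (S ∩ pin y b)) := by
      rw [expect_sub_distrib, Fintype.expect_const]; rfl
    rw [e1, expect_eq_sum_div_card, card_univ, Fintype.card_fin, le_div_iff₀ hn]
    have hUn : (n : ℝ) ≤ 4 * U.card := by exact_mod_cast (by omega : n ≤ 4 * U.card)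
    calc (1 / 4 : ℝ) ^ (k + 1) * W * n ≤ (1 / 4 : ℝ) ^ (k + 1) * W * (4 * U.card) := by gcongr
      _ = ∑ y ∈ U, (1 / 4 : ℝ) ^ k * W := by
          rw [sum_const, nsmul_eq_mul, pow_succ]; ring
      _ ≤ ∑ y ∈ U, (C - pv j (q.map Prod.snd) (S ∩ pin y b)) := sum_le_sum key
      _ ≤ ∑ y : Fin n, (C - pv j (q.map Prod.snd) (S ∩ pin y b)) :=
          sum_le_sum_of_subset_of_nonneg (subset_univ _) fun y _ _ =>
            sub_nonneg.2 ((pv_le _ _ _).trans ((p_mono j Set.inter_subset_left).trans hC))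

/-- If pinning `k` exchangeable variables lowers the satisfiability probability of `S` by `x`,
then adding `k` random clauses lowers it by about `(4⁻ᵏ x) ^ (3 ^ k)` at least. -/
theorem drop_of_pins [Nonempty (EC3Clause n)] (j : ℕ) (q : List (Fin n × Bool))
    (U : Finset (Fin n)) (S : Set (Fin n → Bool)) (hS : Exch U S)
    (hq : (q.map Prod.fst).Nodup) (hqU : ∀ e ∈ q, e.1 ∈ U) (hU : n + 4 * q.length ≤ 4 * U.card) :
    ((1 / 4 : ℝ) ^ q.length * (p j S - p j (S ∩ pins q))) ^ 3 ^ q.length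
      ≤ p j S - p (j + q.length) S + 3 ^ (q.length + 1) / n := by
  have h1 := pv_exch j (p j S) q U S hS le_rfl hq hqU hU
  have hlen : (q.map Prod.snd).length = q.length := List.length_map _
  set a := q.map Prod.snd with ha
  set N := 3 ^ q.length with hN
  have hN0 : N ≠ 0 := by positivity
  have hn : (0 : ℝ) < n := by have := three_le (n := n); positivity
  have h2 : ∀ T : Set (Fin n → Bool), (ne T - pv 0 a T) ^ N
      ≤ ne T - p q.length T + 3 ^ (q.length + 1) / n := by
    intro T
    by_cases hT : T.Nonempty
    · have := blow_up a T
      rw [hlen] at this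
      rw [ne_of_nonempty hT]
      simp only [kv] at this
      linarith
    · obtain rfl := Set.not_nonempty_iff_eq_empty.1 hT
      have h3 : pv 0 a (∅ : Set (Fin n → Bool)) = 0 :=
        le_antisymm ((pv_le 0 a _).trans (p_empty 0).le) (pv_nonneg _ _ _)
      rw [ne_of_not_nonempty hT, p_empty, h3, sub_zero, zero_pow hN0]
      simp only [zero_add]
      positivity
  have h3 : p j S - pv j a S = 𝔼 G : Fin j → EC3Clause n, (ne (S ∩ sol G) - pv 0 a (S ∩ sol G)) := by
    rw [expect_sub_distrib, ← p_eq_expect, ← pv_eq_expect]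
  calc ((1 / 4 : ℝ) ^ q.length * (p j S - p j (S ∩ pins q))) ^ N
      ≤ (p j S - pv j a S) ^ N := by
        refine pow_le_pow_left₀ (mul_nonneg (by positivity)
          (sub_nonneg.2 (p_mono j Set.inter_subset_left))) h1 N
    _ ≤ 𝔼 G : Fin j → EC3Clause n, (ne (S ∩ sol G) - pv 0 a (S ∩ sol G)) ^ N := by
        rw [h3]
        exact expect_pow_le univ univ_nonempty _ (fun G _ => sub_nonneg.2 (pv_le 0 a _)) N
    _ ≤ 𝔼 G : Fin j → EC3Clause n,
          (ne (S ∩ sol G) - p q.length (S ∩ sol G) + 3 ^ (q.length + 1) / n) :=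
        expect_le_expect fun G _ => h2 _
    _ = _ := by
        rw [expect_add_distrib, expect_sub_distrib, Fintype.expect_const, ← p_eq_expect, expect_p]

end

/-! ### Clauses with a small satisfiable neighbourhood have little influence -/

/-- The clause `c` lies in a union `A` of connected components of the formula `y`, of size at most
`k`, such that `c` and the clauses of `y` inside `A` are simultaneously satisfiable. -/
def Good {n s : ℕ} (k : ℕ) (y : Fin s → EC3Clause n) (c : EC3Clause n) : Prop :=
  ∃ (A : Finset (Fin n)) (a : Fin n → Bool), A.card ≤ k ∧ c.1 ⊆ A ∧
    (∀ i, (y i).1 ⊆ A ∨ Disjoint (y i).1 A) ∧ ClauseSat a c.1 ∧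
    ∀ i, (y i).1 ⊆ A → ClauseSat a (y i).1

/-- The probability that `j` random clauses leave `y` satisfiable but not `y` together with `c`. -/
noncomputable def qd {n s : ℕ} (j : ℕ) (y : Fin s → EC3Clause n) (c : EC3Clause n) : ℝ :=
  p j (sol y) - p j (sol y ∩ sat c)

/-- The average of `qd` over the window `[j, j + L)`. -/
noncomputable def Qd {n s : ℕ} (L j : ℕ) (y : Fin s → EC3Clause n) (c : EC3Clause n) : ℝ :=
  𝔼 l ∈ range L, qd (j + l) y c

section

variable {n s : ℕ}

theorem qd_nonneg (j : ℕ) (y : Fin s → EC3Clause n) (c : EC3Clause n) : 0 ≤ qd j y c :=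
  sub_nonneg.2 (p_mono j Set.inter_subset_left)

theorem qd_le_one [Nonempty (EC3Clause n)] (j : ℕ) (y : Fin s → EC3Clause n) (c : EC3Clause n) :
    qd j y c ≤ 1 := by
  have h1 := p_nonneg j (sol y ∩ sat c)
  have h2 := p_le_one j (sol y)
  unfold qd; linarith

theorem Qd_nonneg (L j : ℕ) (y : Fin s → EC3Clause n) (c : EC3Clause n) : 0 ≤ Qd L j y c :=
  expect_nonneg fun _ _ => qd_nonneg _ _ _

theorem Qd_le_one [Nonempty (EC3Clause n)] {L : ℕ} (hL : 0 < L) (j : ℕ) (y : Fin s → EC3Clause n)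
    (c : EC3Clause n) : Qd L j y c ≤ 1 :=
  expect_le (by simpa using hL.ne') fun _ _ => qd_le_one _ _ _

theorem clauseSat_congr {σ τ : Fin n → Bool} {c : Finset (Fin n)} (h : ∀ v ∈ c, σ v = τ v) :
    ClauseSat σ c ↔ ClauseSat τ c := by
  unfold ClauseSat
  rw [filter_congr fun v hv => by rw [h v hv]]

theorem qd_eq_expect (j : ℕ) (y : Fin s → EC3Clause n) (c : EC3Clause n) :
    qd j y c = 𝔼 G : Fin j → EC3Clause n, (ne (sol y ∩ sol G) - ne (sol y ∩ sat c ∩ sol G)) := by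
  rw [qd, p_eq_expect, p_eq_expect, expect_sub_distrib]

/-- Telescoping: shifting a window by `k` changes the sum over it by at most `k`. -/
theorem sum_shift_le {f : ℕ → ℝ} (h0 : ∀ i, 0 ≤ f i) (h1 : ∀ i, f i ≤ 1) (L k : ℕ) :
    ∑ l ∈ range L, (f l - f (l + k)) ≤ k := by
  induction k with
  | zero => simp
  | succ k ih =>
    have : ∑ l ∈ range L, (f l - f (l + (k + 1)))
        = ∑ l ∈ range L, (f l - f (l + k)) - ∑ l ∈ range L, (f (l + 1 + k) - f (l + k)) := by
      rw [← sum_sub_distrib]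
      refine sum_congr rfl fun l _ => ?_
      rw [show l + (k + 1) = l + 1 + k by ring]; ring
    rw [this, sum_range_sub (fun l => f (l + k))]
    push_cast
    have := h0 (L + k)
    have := h1 (0 + k)
    linarith

/-- The influence of `c` is at most the effect of pinning the variables of the small set `A` to a
satisfying assignment of its clauses. The other clauses of `y` do not involve `A`, and the variables
they do not involve are exchangeable, so `drop_of_pins` applies; the drop due to `k` more clauses
is at most `k / L` on average over the window. -/
theorem Qd_good [Nonempty (EC3Clause n)] {k L : ℕ} (hL : 0 < L) (j : ℕ)
    (y : Fin s → EC3Clause n) (c : EC3Clause n) (hg : Good k y c)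
    (hs : 12 * s + 4 * k ≤ 3 * n) :
    ((1 / 4 : ℝ) ^ k * Qd L j y c) ^ 3 ^ k ≤ (k : ℝ) / L + 3 ^ (k + 1) / n := by
  classical
  obtain ⟨A, a, hAk, hcA, hyA, hac, hay⟩ := hg
  have hn : (0 : ℝ) < n := by have := three_le (n := n); positivity
  set S0 : Set (Fin n → Bool) := {σ | ∀ i, Disjoint (y i).1 A → ClauseSat σ (y i).1} with hS0
  set q : List (Fin n × Bool) := A.toList.map fun v => (v, a v) with hq
  have hlen : q.length = A.card := by simp [hq]
  set B : Finset (Fin n) := univ.biUnion fun i : Fin s =>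
    if Disjoint (y i).1 A then (y i).1 else ∅ with hB
  have hBcard : B.card ≤ s * 3 := by
    refine (card_biUnion_le_card_mul univ _ 3 fun i _ => ?_).trans (by simp)
    split_ifs
    · exact (y i).2.le
    · simp
  have hAB : Disjoint A B := by
    rw [hB, disjoint_biUnion_right]
    intro i _
    split_ifs with h
    · exact h.symm
    · simp
  have hU : Exch (univ \ B) S0 := by
    intro x hx z hz σ
    simp only [Finset.mem_sdiff, mem_univ, true_and] at hx hz
    simp only [hS0, Set.mem_ofPred_eq]
    refine forall_congr' fun i => imp_congr_right fun hi => clauseSat_congr fun v hv => ?_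
    have hvB : v ∈ B := by
      rw [hB, mem_biUnion]; exact ⟨i, mem_univ i, by rw [if_pos hi]; exact hv⟩
    rw [Function.comp_apply, Equiv.swap_apply_of_ne_of_ne]
    · rintro rfl; exact hx hvB
    · rintro rfl; exact hz hvB
  have hUc : n + 4 * q.length ≤ 4 * (univ \ B).card := by
    rw [hlen, card_sdiff_of_subset (subset_univ _), card_univ, Fintype.card_fin]; omega
  have hqf : q.map Prod.fst = A.toList := by simp [hq, Function.comp_def]
  have hdrop := fun j => drop_of_pins j q (univ \ B) S0 hU
    (by rw [hqf]; exact nodup_toList A)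
    (by
      intro e he
      obtain ⟨v, hv, rfl⟩ := List.mem_map.1 he
      simp only [Finset.mem_sdiff, mem_univ, true_and]
      exact disjoint_left.1 hAB (mem_toList.1 hv)) hUc
  rw [hlen] at hdrop
  have hqd : ∀ j, qd j y c ≤ p j S0 - p j (S0 ∩ pins q) := by
    intro j
    rw [qd_eq_expect, p_eq_expect, p_eq_expect, ← expect_sub_distrib]
    refine expect_le_expect fun G _ => ?_
    by_cases h1 : (S0 ∩ pins q ∩ sol G).Nonempty
    · obtain ⟨σ, ⟨hσ0, hσq⟩, hσG⟩ := h1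
      have hσa : ∀ v ∈ A, σ v = a v := fun v hv =>
        hσq (v, a v) (List.mem_map.2 ⟨v, mem_toList.2 hv, rfl⟩)
      have h2 : (sol y ∩ sat c ∩ sol G).Nonempty := by
        refine ⟨σ, ⟨fun i => ?_, ?_⟩, hσG⟩
        · rcases hyA i with h | h
          · exact (clauseSat_congr fun v hv => hσa v (h hv)).2 (hay i h)
          · exact hσ0 i h
        · exact (clauseSat_congr fun v hv => hσa v (hcA hv)).2 hac
      rw [ne_of_nonempty h2]
      have h3 := ne_le_one (sol y ∩ sol G)
      have h4 : ne (S0 ∩ pins q ∩ sol G) ≤ ne (S0 ∩ sol G) :=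
        ne_mono (Set.inter_subset_inter_left _ Set.inter_subset_left)
      linarith
    · rw [ne_of_not_nonempty h1]
      have h3 := ne_nonneg (sol y ∩ sat c ∩ sol G)
      have h4 : ne (sol y ∩ sol G) ≤ ne (S0 ∩ sol G) :=
        ne_mono (Set.inter_subset_inter_left _ fun σ hσ i _ => hσ i)
      linarith
  set r := A.card with hr
  have hL' : (0 : ℝ) < L := by exact_mod_cast hL
  have hLne : (range L).Nonempty := by simpa using hL.ne'
  have hQ0 := Qd_nonneg L j y c
  have hQ1 := Qd_le_one hL j y c
  have h5 : ((1 / 4 : ℝ) ^ r * Qd L j y c) ^ 3 ^ r ≤ (r : ℝ) / L + 3 ^ (r + 1) / n := by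
    rw [Qd, mul_expect]
    calc _ ≤ 𝔼 l ∈ range L, ((1 / 4 : ℝ) ^ r * qd (j + l) y c) ^ 3 ^ r :=
          expect_pow_le _ hLne _ (fun l _ => mul_nonneg (by positivity) (qd_nonneg _ _ _)) _
      _ ≤ 𝔼 l ∈ range L, (p (j + l) S0 - p (j + l + r) S0 + 3 ^ (r + 1) / n) := by
          refine expect_le_expect fun l _ => le_trans ?_ (hdrop (j + l))
          refine pow_le_pow_left₀ (mul_nonneg (by positivity) (qd_nonneg _ _ _)) ?_ _
          exact mul_le_mul_of_nonneg_left (hqd _) (by positivity)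
      _ ≤ _ := by
          rw [expect_add_distrib, expect_const hLne, expect_eq_sum_div_card, card_range]
          gcongr
          simp only [add_assoc]
          exact sum_shift_le (f := fun l => p (j + l) S0) (fun _ => p_nonneg _ _)
            (fun _ => p_le_one _ _) L r
  calc ((1 / 4 : ℝ) ^ k * Qd L j y c) ^ 3 ^ k
      ≤ ((1 / 4 : ℝ) ^ r * Qd L j y c) ^ 3 ^ k := by
        refine pow_le_pow_left₀ (by positivity) (mul_le_mul_of_nonneg_right ?_ hQ0) _
        exact pow_le_pow_of_le_one (by norm_num) (by norm_num) hAk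
    _ ≤ ((1 / 4 : ℝ) ^ r * Qd L j y c) ^ 3 ^ r := by
        refine pow_le_pow_of_le_one (by positivity) ?_ (Nat.pow_le_pow_right (by norm_num) hAk)
        exact mul_le_one₀ (pow_le_one₀ (by norm_num) (by norm_num)) hQ0 hQ1
    _ ≤ (r : ℝ) / L + 3 ^ (r + 1) / n := h5
    _ ≤ _ := by
        gcongr
        norm_num

end

/-! ### Minimal unsatisfiable formulas -/

section

variable {n : ℕ}

/-- Simultaneous satisfiability of a finite set of clauses. -/
def FSat (F : Finset (EC3Clause n)) : Prop := ∃ σ : Fin n → Bool, ∀ c ∈ F, ClauseSat σ c.1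

/-- The variables occurring in a finite set of clauses. -/
def vars (F : Finset (EC3Clause n)) : Finset (Fin n) := F.biUnion fun c => c.1

/-- The variables occurring in `c` and in no other clause of `F`. -/
noncomputable def priv (F : Finset (EC3Clause n)) (c : EC3Clause n) : Finset (Fin n) :=
  c.1.filter fun v => ∀ d ∈ F, v ∈ d.1 → d = c

/-- In a minimal unsatisfiable formula no clause has two private variables: `c` could be satisfied by
adjusting them in a solution of the other clauses. -/
theorem card_priv_le_one {F : Finset (EC3Clause n)} (hF : ¬ FSat F)
    (hmin : ∀ c ∈ F, FSat (F.erase c)) {c : EC3Clause n} (hc : c ∈ F) : (priv F c).card ≤ 1 := by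
  classical
  by_contra hlt
  push Not at hlt
  obtain ⟨u, hu, w, hw, huw⟩ := one_lt_card.1 hlt
  obtain ⟨σ, hσ⟩ := hmin c hc
  simp only [priv, mem_filter] at hu hw
  obtain ⟨x, hx⟩ : ∃ x, c.1 = {u, w, x} ∧ x ≠ u ∧ x ≠ w := by
    have h1 : ((c.1.erase u).erase w).card = 1 := by
      rw [card_erase_of_mem (mem_erase.2 ⟨huw.symm, hw.1⟩), card_erase_of_mem hu.1, c.2]
    obtain ⟨x, hx⟩ := card_eq_one.1 h1
    have hx' : x ∈ (c.1.erase u).erase w := by rw [hx]; simp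
    simp only [mem_erase] at hx'
    refine ⟨x, ?_, hx'.2.1, hx'.1⟩
    rw [← hx, insert_erase (mem_erase.2 ⟨huw.symm, hw.1⟩), insert_erase hu.1]
  obtain ⟨hcx, hxu, hxw⟩ := hx
  apply hF
  -- exactly one of `u`, `x` is true and `w` is false
  refine ⟨Function.update (Function.update σ w false) u (!σ x), fun d hd => ?_⟩
  by_cases hdc : d = c
  · subst hdc
    unfold ClauseSat
    rw [hcx]
    cases hσx : σ x
    · rw [card_eq_one]
      refine ⟨u, ?_⟩
      ext v
      simp only [mem_filter, mem_insert, mem_singleton, Function.update_apply]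
      grind
    · rw [card_eq_one]
      refine ⟨x, ?_⟩
      ext v
      simp only [mem_filter, mem_insert, mem_singleton, Function.update_apply]
      grind
  · refine (clauseSat_congr fun v hv => ?_).2 (hσ d (mem_erase.2 ⟨hdc, hd⟩))
    have h1 : v ≠ u := by rintro rfl; exact hdc (hu.2 d hd hv)
    have h2 : v ≠ w := by rintro rfl; exact hdc (hw.2 d hd hv)
    simp [h1, h2]

/-- Some clause of a minimal unsatisfiable formula has no private variable: otherwise, setting exactly
the private variables to true would satisfy every clause. -/
theorem exists_priv_empty {F : Finset (EC3Clause n)} (hF : ¬ FSat F)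
    (hmin : ∀ c ∈ F, FSat (F.erase c)) : ∃ c ∈ F, priv F c = ∅ := by
  classical
  by_contra hcon
  push Not at hcon
  apply hF
  refine ⟨fun v => decide (∃ d ∈ F, v ∈ priv F d), fun c hc => ?_⟩
  unfold ClauseSat
  have h1 : (c.1.filter fun v => decide (∃ d ∈ F, v ∈ priv F d) = true) = priv F c := by
    ext v
    simp only [mem_filter, decide_eq_true_eq]
    constructor
    · rintro ⟨hv, d, hd, hvd⟩
      have := (mem_filter.1 hvd).2 c hc hv
      rw [this]; exact hvd
    · intro hv
      exact ⟨(mem_filter.1 hv).1, c, hc, hv⟩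
  rw [h1]
  exact le_antisymm (card_priv_le_one hF hmin hc)
    (card_pos.2 (hcon c hc))

/-- A minimal unsatisfiable formula with `j` clauses has at most `2 j - 1` variables. -/
theorem card_vars_lt {F : Finset (EC3Clause n)} (hF : ¬ FSat F)
    (hmin : ∀ c ∈ F, FSat (F.erase c)) : (vars F).card + 1 ≤ 2 * F.card := by
  classical
  obtain ⟨c₀, hc₀, hp₀⟩ := exists_priv_empty hF hmin
  have hpriv : ∑ c ∈ F, (priv F c).card + 1 ≤ F.card := by
    rw [← sum_erase_add _ _ hc₀, hp₀, card_empty, add_zero]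
    have : ∑ c ∈ F.erase c₀, (priv F c).card ≤ (F.erase c₀).card := by
      rw [card_eq_sum_ones]
      exact sum_le_sum fun c hc => card_priv_le_one hF hmin (mem_of_mem_erase hc)
    rw [card_erase_of_mem hc₀] at this
    have := card_pos.2 ⟨c₀, hc₀⟩
    omega
  have hdeg : ∀ v ∈ vars F, 2 ≤ (F.filter fun c => v ∈ c.1).card
      + (F.filter fun c => v ∈ priv F c).card := by
    intro v hv
    obtain ⟨c, hc, hvc⟩ := mem_biUnion.1 hv
    have h1 : 1 ≤ (F.filter fun c => v ∈ c.1).card :=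
      card_pos.2 ⟨c, mem_filter.2 ⟨hc, hvc⟩⟩
    by_cases h : v ∈ priv F c
    · have : 1 ≤ (F.filter fun c => v ∈ priv F c).card :=
        card_pos.2 ⟨c, mem_filter.2 ⟨hc, h⟩⟩
      omega
    · simp only [priv, mem_filter, not_and, not_forall] at h
      obtain ⟨d, hd, hvd, hdc⟩ := h hvc
      have : 1 < (F.filter fun c => v ∈ c.1).card :=
        one_lt_card.2 ⟨d, mem_filter.2 ⟨hd, hvd⟩, c, mem_filter.2 ⟨hc, hvc⟩, hdc⟩
      omega
  have hsum := sum_le_sum hdeg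
  rw [sum_add_distrib, sum_const, smul_eq_mul] at hsum
  have e1 : ∑ v ∈ vars F, (F.filter fun c => v ∈ c.1).card ≤ 3 * F.card := by
    have h := sum_card_bipartiteAbove_eq_sum_card_bipartiteBelow
      (s := vars F) (t := F) (fun v (c : EC3Clause n) => v ∈ c.1)
    simp only [bipartiteAbove, bipartiteBelow] at h
    rw [h]
    rw [mul_comm, ← smul_eq_mul, ← sum_const]
    refine sum_le_sum fun c _ => ?_
    refine le_trans (card_le_card ?_) c.2.le
    exact fun v hv => (mem_filter.1 hv).2
  have e2 : ∑ v ∈ vars F, (F.filter fun c => v ∈ priv F c).card ≤ ∑ c ∈ F, (priv F c).card := by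
    have h := sum_card_bipartiteAbove_eq_sum_card_bipartiteBelow
      (s := vars F) (t := F) (fun v (c : EC3Clause n) => v ∈ priv F c)
    simp only [bipartiteAbove, bipartiteBelow] at h
    rw [h]
    exact sum_le_sum fun c _ => card_le_card fun v hv => (mem_filter.1 hv).2
  omega

theorem exists_minimal_unsat {F : Finset (EC3Clause n)} (hF : ¬ FSat F) :
    ∃ F' ⊆ F, ¬ FSat F' ∧ ∀ c ∈ F', FSat (F'.erase c) := by
  induction hk : F.card using Nat.strong_induction_on generalizing F with
  | _ k ih =>
    by_cases h : ∀ c ∈ F, FSat (F.erase c)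
    · exact ⟨F, Subset.rfl, hF, h⟩
    · push Not at h
      obtain ⟨c, hc, hcF⟩ := h
      obtain ⟨F', h1, h2⟩ := ih (F.erase c).card (by rw [← hk]; exact card_erase_lt_of_mem hc) hcF rfl
      exact ⟨F', h1.trans (erase_subset _ _), h2⟩

/-- The clause `c` and `j` clauses of `y` have at most `2 j + 1` variables altogether. -/
def Tangled {s : ℕ} (j : ℕ) (y : Fin s → EC3Clause n) (c : EC3Clause n) : Prop :=
  ∃ (w : Fin j → Fin s) (z : Fin (2 * j + 1) → Fin n),
    Function.Injective w ∧ c.1 ⊆ univ.image z ∧ ∀ i, (y (w i)).1 ⊆ univ.image z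

/-- An unsatisfiable union of components of `y` together with `c` contains a tangled set. -/
theorem tangled_of_unsat {s k : ℕ} {y : Fin s → EC3Clause n} {c : EC3Clause n}
    (hy : (sol y).Nonempty) {A : Finset (Fin n)} (hA : A.card ≤ k) (hcA : c.1 ⊆ A)
    (h : ¬ ∃ a : Fin n → Bool, ClauseSat a c.1 ∧ ∀ i, (y i).1 ⊆ A → ClauseSat a (y i).1) :
    ∃ j < 2 ^ k, Tangled j y c := by
  classical
  set F : Finset (EC3Clause n) :=
    insert c ((univ.filter fun i => (y i).1 ⊆ A).image y) with hFdef
  have hF : ¬ FSat F := by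
    rintro ⟨a, ha⟩
    refine h ⟨a, ha c (by simp [hFdef]), fun i hi => ha _ ?_⟩
    rw [hFdef, mem_insert]
    exact Or.inr (mem_image.2 ⟨i, by simp [hi], rfl⟩)
  obtain ⟨F', hF'F, hun, hmin⟩ := exists_minimal_unsat hF
  have hmem : ∀ d ∈ F', d ≠ c → ∃ i, y i = d := by
    intro d hd hdc
    have := hF'F hd
    rw [hFdef, mem_insert] at this
    obtain ⟨i, _, hi⟩ := mem_image.1 (this.resolve_left hdc)
    exact ⟨i, hi⟩
  have hcF' : c ∈ F' := by
    by_contra hc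
    obtain ⟨σ, hσ⟩ := hy
    refine hun ⟨σ, fun d hd => ?_⟩
    obtain ⟨i, rfl⟩ := hmem d hd (by rintro rfl; exact hc hd)
    exact hσ i
  have hFA : ∀ d ∈ F', d.1 ⊆ A := by
    intro d hd
    have := hF'F hd
    rw [hFdef, mem_insert] at this
    rcases this with rfl | h
    · exact hcA
    · obtain ⟨i, hi, rfl⟩ := mem_image.1 h
      exact (mem_filter.1 hi).2
  have hcard : F'.card ≤ 2 ^ k := by
    calc F'.card = (F'.image Subtype.val).card :=
          (card_image_of_injective _ Subtype.val_injective).symm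
      _ ≤ A.powerset.card := card_le_card fun d hd => by
          obtain ⟨e, he, rfl⟩ := mem_image.1 hd
          exact mem_powerset.2 (hFA e he)
      _ ≤ 2 ^ k := by rw [card_powerset]; exact Nat.pow_le_pow_right (by norm_num) hA
  have hpos := card_pos.2 ⟨c, hcF'⟩
  have hvars := card_vars_lt hun hmin
  obtain ⟨j, hj⟩ : ∃ j, F'.card = j + 1 := ⟨F'.card - 1, by omega⟩
  have hej : (F'.erase c).card = j := by rw [card_erase_of_mem hcF']; omega
  let f := ((F'.erase c).equivFinOfCardEq hej).symm
  have hf : ∀ i, ∃ l, y l = (f i).1 := fun i =>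
    hmem _ (mem_of_mem_erase (f i).2) (ne_of_mem_erase (f i).2)
  choose w hw using hf
  have hvne : (vars F').Nonempty := by
    have : c.1.Nonempty := card_pos.1 (by rw [c.2]; norm_num)
    exact this.mono fun v hv => mem_biUnion.2 ⟨c, hcF', hv⟩
  obtain ⟨z, hz⟩ : ∃ z : Fin (2 * j + 1) → Fin n, vars F' ⊆ univ.image z := by
    obtain ⟨v₀, hv₀⟩ := hvne
    let g := (vars F').equivFin.symm
    refine ⟨fun i => if hi : i.1 < (vars F').card then (g ⟨i.1, hi⟩).1 else v₀, fun v hv => ?_⟩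
    have hlt := (g.symm ⟨v, hv⟩).2
    refine mem_image.2 ⟨⟨(g.symm ⟨v, hv⟩).1, by omega⟩, mem_univ _, ?_⟩
    simp
  refine ⟨j, by omega, w, z, fun i i' hii => ?_, ?_, fun i => ?_⟩
  · have h1 := hw i
    rw [hii, hw i'] at h1
    exact f.injective (Subtype.ext h1.symm)
  · exact fun v hv => hz (mem_biUnion.2 ⟨c, hcF', hv⟩)
  · rw [hw i]
    exact fun v hv => hz (mem_biUnion.2 ⟨_, mem_of_mem_erase (f i).2, hv⟩)

end

/-! ### Probability estimates for local structures -/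

open Classical in
/-- The `{0, 1}`-valued indicator of a proposition. -/
noncomputable def ind (P : Prop) : ℝ := if P then 1 else 0

theorem ind_nonneg (P : Prop) : 0 ≤ ind P := by unfold ind; split_ifs <;> norm_num

theorem ind_le_one (P : Prop) : ind P ≤ 1 := by unfold ind; split_ifs <;> norm_num

theorem ind_of {P : Prop} (h : P) : ind P = 1 := by simp [ind, h]

theorem ind_of_not {P : Prop} (h : ¬ P) : ind P = 0 := by simp [ind, h]

theorem ind_exists_le {α : Type*} [Fintype α] (P : α → Prop) : ind (∃ a, P a) ≤ ∑ a, ind (P a) := by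
  by_cases h : ∃ a, P a
  · obtain ⟨a, ha⟩ := h
    rw [ind_of ⟨a, ha⟩, ← ind_of ha]
    exact single_le_sum (f := fun a => ind (P a)) (fun a _ => ind_nonneg _) (mem_univ a)
  · rw [ind_of_not h]; exact sum_nonneg fun a _ => ind_nonneg _

open Classical in
theorem sum_ind {α : Type*} [Fintype α] (P : α → Prop) :
    ∑ a, ind (P a) = ((univ.filter P).card : ℝ) := by
  simp only [ind]
  rw [Finset.sum_boole]

theorem expect_prod_eq {ι α : Type*} [Fintype ι] [DecidableEq ι] [Fintype α] (g : ι → α → ℝ) :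
    𝔼 x : ι → α, ∏ i, g i (x i) = ∏ i, 𝔼 a, g i a := by
  simp only [expect_eq_sum_div_card, card_univ]
  rw [prod_div_distrib, prod_univ_sum, Fintype.piFinset_univ]
  simp

theorem choose_three_le {k n : ℕ} (hn : 3 ≤ n) (hk : k ≤ n) :
    (k.choose 3 : ℝ) / n.choose 3 ≤ ((k : ℝ) / n) ^ 3 := by
  have hn' : (3 : ℝ) ≤ n := by exact_mod_cast hn
  have hk' : (k : ℝ) ≤ n := by exact_mod_cast hk
  rw [choose_three, choose_three, div_div_div_cancel_right₀ (by norm_num), div_pow]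
  have hd : 0 < (n : ℝ) * (n - 1) * (n - 2) :=
    mul_pos (mul_pos (by linarith) (by linarith)) (by linarith)
  rcases Nat.lt_or_ge k 2 with h | h
  · have h0 : (k : ℝ) * (k - 1) = 0 := by
      interval_cases k <;> simp
    rw [h0]; simp only [zero_mul, zero_div]; positivity
  · have h2 : (2 : ℝ) ≤ k := by exact_mod_cast h
    rw [div_le_div_iff₀ hd (by positivity)]
    have a1 : ((k : ℝ) - 1) * n ≤ k * (n - 1) := by nlinarith
    have a2 : ((k : ℝ) - 2) * n ≤ k * (n - 2) := by nlinarith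
    have a3 : (((k : ℝ) - 1) * n) * ((k - 2) * n) ≤ (k * (n - 1)) * (k * (n - 2)) :=
      mul_le_mul a1 a2 (mul_nonneg (by linarith) (by linarith))
        (mul_nonneg (by linarith) (by linarith))
    have a4 : 0 ≤ (k : ℝ) * n := by positivity
    nlinarith [mul_le_mul_of_nonneg_left a3 a4]

section

variable {n : ℕ}

theorem expect_ind_subset_le [Nonempty (EC3Clause n)] (B : Finset (Fin n)) :
    𝔼 c : EC3Clause n, ind (c.1 ⊆ B) ≤ ((B.card : ℝ) / n) ^ 3 := by
  classical
  refine le_trans ?_ (choose_three_le three_le (by simpa using card_le_univ B))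
  rw [expect_eq_sum_div_card, card_univ, card_clause]
  gcongr
  rw [sum_ind fun c : EC3Clause n => c.1 ⊆ B]
  norm_cast
  rw [← card_powersetCard]
  refine Finset.card_le_card_of_injOn (fun c : EC3Clause n => c.1) ?_
    (fun c _ d _ h => Subtype.ext h)
  intro c hc
  simp only [coe_filter, mem_univ, true_and] at hc
  exact mem_coe.2 (mem_powersetCard.2 ⟨hc, c.2⟩)

theorem expect_ind_mem [Nonempty (EC3Clause n)] (v : Fin n) :
    𝔼 c : EC3Clause n, ind (v ∈ c.1) = 3 / n := by
  classical
  have hn : (0 : ℝ) < n := by have := three_le (n := n); positivity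
  have hsym : ∀ w, 𝔼 c : EC3Clause n, ind (w ∈ c.1) = 𝔼 c : EC3Clause n, ind (v ∈ c.1) := by
    intro w
    refine Fintype.expect_bijective (ren (Equiv.swap v w)) ?_ _ _ fun c => ?_
    · rw [Fintype.bijective_iff_injective_and_card]
      refine ⟨fun c d h => ?_, rfl⟩
      exact Subtype.ext (map_injective _ (congrArg Subtype.val h))
    · congr 1
      simp only [ren, mem_map_equiv, Equiv.symm_swap, Equiv.swap_apply_left]
  have hsum : ∑ w : Fin n, 𝔼 c : EC3Clause n, ind (w ∈ c.1) = 3 := by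
    rw [← expect_sum_comm]
    have : ∀ c : EC3Clause n, ∑ w : Fin n, ind (w ∈ c.1) = 3 := by
      intro c
      rw [sum_ind fun w => w ∈ c.1]
      exact_mod_cast (congrArg card (by ext; simp)).trans c.2
    simp [this]
  simp only [hsym, sum_const, card_univ, Fintype.card_fin, nsmul_eq_mul] at hsum
  field_simp
  linarith

/-- Union bound over the `j` positions in `y` and over the sequences of `2 j + 1` variables containing
all the clauses involved. -/
theorem expect_tangled [Nonempty (EC3Clause n)] (s j : ℕ) :
    𝔼 y : Fin s → EC3Clause n, 𝔼 c : EC3Clause n, ind (Tangled j y c)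
      ≤ (s : ℝ) ^ j * n ^ (2 * j + 1) * (((2 * j + 1 : ℕ) : ℝ) / n) ^ (3 * (j + 1)) := by
  classical
  have hn : (0 : ℝ) < n := by have := three_le (n := n); positivity
  set β : ℝ := ((2 * j + 1 : ℕ) : ℝ) / n with hβ
  have hstep : ∀ (w : Fin j → Fin s) (z : Fin (2 * j + 1) → Fin n),
      𝔼 y : Fin s → EC3Clause n, 𝔼 c : EC3Clause n,
        ind (Function.Injective w ∧ c.1 ⊆ univ.image z ∧ ∀ i, (y (w i)).1 ⊆ univ.image z)
      ≤ β ^ (3 * (j + 1)) := by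
    intro w z
    by_cases hw : Function.Injective w
    · set μ : ℝ := 𝔼 c : EC3Clause n, ind (c.1 ⊆ univ.image z) with hμ
      have hμβ : μ ≤ β ^ 3 := by
        refine (expect_ind_subset_le _).trans ?_
        rw [hβ]
        gcongr
        simpa using card_image_le (s := univ) (f := z)
      have hμ0 : 0 ≤ μ := expect_nonneg fun _ _ => ind_nonneg _
      have h1 : ∀ (y : Fin s → EC3Clause n) (c : EC3Clause n),
          ind (Function.Injective w ∧ c.1 ⊆ univ.image z ∧ ∀ i, (y (w i)).1 ⊆ univ.image z)
          ≤ (∏ l, if l ∈ univ.image w then ind ((y l).1 ⊆ univ.image z) else 1)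
            * ind (c.1 ⊆ univ.image z) := by
        intro y c
        by_cases h : Function.Injective w ∧ c.1 ⊆ univ.image z ∧ ∀ i, (y (w i)).1 ⊆ univ.image z
        · rw [ind_of h, ind_of h.2.1, mul_one, prod_eq_one]
          intro l _
          split_ifs with hl
          · obtain ⟨i, _, rfl⟩ := mem_image.1 hl
            exact ind_of (h.2.2 i)
          · rfl
        · rw [ind_of_not h]
          refine mul_nonneg (prod_nonneg fun l _ => ?_) (ind_nonneg _)
          split_ifs
          · exact ind_nonneg _
          · norm_num
      calc _ ≤ 𝔼 y : Fin s → EC3Clause n, 𝔼 c : EC3Clause n,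
            (∏ l, if l ∈ univ.image w then ind ((y l).1 ⊆ univ.image z) else 1)
            * ind (c.1 ⊆ univ.image z) :=
            expect_le_expect fun y _ => expect_le_expect fun c _ => h1 y c
        _ = μ ^ j * μ := by
            simp_rw [← mul_expect]
            rw [← expect_mul, ← hμ, expect_prod_eq (fun (l : Fin s) (c : EC3Clause n) =>
              if l ∈ univ.image w then ind (c.1 ⊆ univ.image z) else 1)]
            congr 1
            have : ∀ l : Fin s, (𝔼 c : EC3Clause n,
                if l ∈ univ.image w then ind (c.1 ⊆ univ.image z) else 1)
                = if l ∈ univ.image w then μ else 1 := by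
              intro l
              split_ifs
              · rfl
              · simp
            rw [prod_congr rfl fun l _ => this l, prod_ite, prod_const_one, mul_one, prod_const,
              filter_mem_eq_inter, univ_inter, card_image_of_injective _ hw, card_univ,
              Fintype.card_fin]
        _ ≤ (β ^ 3) ^ j * β ^ 3 := by gcongr
        _ = β ^ (3 * (j + 1)) := by rw [← pow_mul, ← pow_add]; ring_nf
    · have : ∀ (y : Fin s → EC3Clause n) (c : EC3Clause n),
          ind (Function.Injective w ∧ c.1 ⊆ univ.image z ∧ ∀ i, (y (w i)).1 ⊆ univ.image z) = 0 :=
        fun y c => ind_of_not fun h => hw h.1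
      simp only [this, expect_const_zero]
      positivity
  calc _ ≤ 𝔼 y : Fin s → EC3Clause n, 𝔼 c : EC3Clause n,
        ∑ w : Fin j → Fin s, ∑ z : Fin (2 * j + 1) → Fin n,
        ind (Function.Injective w ∧ c.1 ⊆ univ.image z ∧ ∀ i, (y (w i)).1 ⊆ univ.image z) :=
        expect_le_expect fun y _ => expect_le_expect fun c _ =>
          (ind_exists_le _).trans (sum_le_sum fun w _ => ind_exists_le _)
    _ = ∑ w : Fin j → Fin s, ∑ z : Fin (2 * j + 1) → Fin n,
        𝔼 y : Fin s → EC3Clause n, 𝔼 c : EC3Clause n,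
        ind (Function.Injective w ∧ c.1 ⊆ univ.image z ∧ ∀ i, (y (w i)).1 ⊆ univ.image z) := by
        simp only [expect_sum_comm]
    _ ≤ ∑ w : Fin j → Fin s, ∑ z : Fin (2 * j + 1) → Fin n, β ^ (3 * (j + 1)) :=
        sum_le_sum fun w _ => sum_le_sum fun z _ => hstep w z
    _ = _ := by simp [mul_assoc]

/-- The number of clauses containing a variable. -/
noncomputable def deg {ι : Type*} [Fintype ι] (x : ι → EC3Clause n) (v : Fin n) : ℕ :=
  (univ.filter fun i => v ∈ (x i).1).card

/-- Exponential moment bound for the maximal degree. -/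
theorem expect_deg [Nonempty (EC3Clause n)] {ι : Type*} [Fintype ι] [DecidableEq ι] (Δ : ℕ) :
    𝔼 x : ι → EC3Clause n, ind (∃ v, Δ < deg x v)
      ≤ n * ((1 / 2) ^ Δ * Real.exp (3 * Fintype.card ι / n)) := by
  classical
  have hn : (0 : ℝ) < n := by have := three_le (n := n); positivity
  have hv : ∀ v : Fin n, 𝔼 x : ι → EC3Clause n, ind (Δ < deg x v)
      ≤ (1 / 2) ^ Δ * Real.exp (3 * Fintype.card ι / n) := by
    intro v
    have h1 : ∀ x : ι → EC3Clause n,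
        ind (Δ < deg x v) ≤ (1 / 2) ^ Δ * ∏ i, (1 + ind (v ∈ (x i).1)) := by
      intro x
      have e : ∏ i, (1 + ind (v ∈ (x i).1)) = 2 ^ deg x v := by
        have : ∀ i, 1 + ind (v ∈ (x i).1) = if v ∈ (x i).1 then 2 else 1 := by
          intro i; unfold ind; split_ifs <;> norm_num
        rw [prod_congr rfl fun i _ => this i, prod_ite, prod_const_one, mul_one, prod_const]
        rfl
      rw [e]
      by_cases h : Δ < deg x v
      · rw [ind_of h, one_div, inv_pow, inv_mul_eq_div, le_div_iff₀ (by positivity), one_mul]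
        exact pow_le_pow_right₀ (by norm_num) h.le
      · rw [ind_of_not h]; positivity
    calc _ ≤ 𝔼 x : ι → EC3Clause n, (1 / 2) ^ Δ * ∏ i, (1 + ind (v ∈ (x i).1)) :=
          expect_le_expect fun x _ => h1 x
      _ = (1 / 2) ^ Δ * (1 + 3 / n) ^ Fintype.card ι := by
          rw [← mul_expect, expect_prod_eq (fun (_ : ι) (c : EC3Clause n) => 1 + ind (v ∈ c.1))]
          rw [prod_const, expect_add_distrib, Fintype.expect_const, expect_ind_mem, card_univ]
      _ ≤ _ := by
          gcongr
          calc (1 + 3 / (n : ℝ)) ^ Fintype.card ι ≤ Real.exp (3 / n) ^ Fintype.card ι := by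
                gcongr
                rw [add_comm]; exact Real.add_one_le_exp _
            _ = _ := by rw [← Real.exp_nat_mul]; congr 1; ring
  calc _ ≤ 𝔼 x : ι → EC3Clause n, ∑ v, ind (Δ < deg x v) :=
        expect_le_expect fun x _ => ind_exists_le _
    _ = ∑ v, 𝔼 x : ι → EC3Clause n, ind (Δ < deg x v) := expect_sum_comm _ _ _
    _ ≤ ∑ v : Fin n, (1 / 2) ^ Δ * Real.exp (3 * Fintype.card ι / n) := sum_le_sum fun v _ => hv v
    _ = _ := by simp

/-! ### Connected sequences of clauses -/

/-- The variables reached from `c` through the clauses `z`. -/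
noncomputable def reach (c : EC3Clause n) : (r : ℕ) → (Fin r → EC3Clause n) → Finset (Fin n)
  | 0, _ => c.1
  | r + 1, z => reach c r (fun i => z i.castSucc) ∪ (z (Fin.last r)).1

/-- Each clause in the sequence meets `c` or an earlier one. -/
def Conn (c : EC3Clause n) : (r : ℕ) → (Fin r → EC3Clause n) → Prop
  | 0, _ => True
  | r + 1, z => Conn c r (fun i => z i.castSucc) ∧
      ¬ Disjoint (z (Fin.last r)).1 (reach c r fun i => z i.castSucc)

theorem card_reach (c : EC3Clause n) (r : ℕ) (z : Fin r → EC3Clause n) :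
    (reach c r z).card ≤ 3 * (r + 1) := by
  induction r with
  | zero => simp [reach, c.2]
  | succ r ih =>
    refine (card_union_le _ _).trans ?_
    have h1 := ih fun i => z i.castSucc
    have h2 := (z (Fin.last r)).2
    omega

theorem subset_reach (c : EC3Clause n) (r : ℕ) (z : Fin r → EC3Clause n) : c.1 ⊆ reach c r z := by
  induction r with
  | zero => simp [reach]
  | succ r ih => exact (ih _).trans subset_union_left

theorem subset_reach' (c : EC3Clause n) (r : ℕ) (z : Fin r → EC3Clause n) (i : Fin r) :
    (z i).1 ⊆ reach c r z := by
  induction r with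
  | zero => exact i.elim0
  | succ r ih =>
    refine Fin.lastCases ?_ (fun i => ?_) i
    · exact subset_union_right
    · exact (ih (fun i => z i.castSucc) i).trans subset_union_left

open Classical in
/-- If all degrees are at most `Δ`, each step of a connected sequence has at most `3 r₀ Δ` choices. -/
theorem card_conn_le {ι : Type*} [Fintype ι] (c : EC3Clause n) (x : ι → EC3Clause n) {Δ : ℕ}
    (hΔ : ∀ v, deg x v ≤ Δ) {r₀ : ℕ} (r : ℕ) (hr : r ≤ r₀) :
    (univ.filter fun e : Fin r → ι => Conn c r (x ∘ e)).card ≤ (3 * r₀ * Δ) ^ r := by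
  induction r with
  | zero => exact (card_le_univ _).trans (by simp)
  | succ r ih =>
    have hmeet : ∀ B : Finset (Fin n), (univ.filter fun i => ¬ Disjoint (x i).1 B).card
        ≤ B.card * Δ := by
      intro B
      refine le_trans (card_le_card (t := B.biUnion fun v => univ.filter fun i => v ∈ (x i).1) ?_)
        (card_biUnion_le_card_mul _ _ _ fun v _ => hΔ v)
      intro i hi
      obtain ⟨v, h1, h2⟩ := not_disjoint_iff.1 (mem_filter.1 hi).2
      exact mem_biUnion.2 ⟨v, h2, by simpa using h1⟩
    calc _ ≤ ((univ.filter fun e : Fin r → ι => Conn c r (x ∘ e)).sigma fun e =>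
          univ.filter fun i => ¬ Disjoint (x i).1 (reach c r (x ∘ e))).card := by
          refine card_le_card_of_injOn (fun e => ⟨fun i => e i.castSucc, e (Fin.last r)⟩) ?_ ?_
          · intro e he
            have he' : Conn c (r + 1) (x ∘ e) := (mem_filter.1 (mem_coe.1 he)).2
            refine mem_coe.2 (mem_sigma.2 ⟨?_, ?_⟩)
            · exact mem_filter.2 ⟨mem_univ _, he'.1⟩
            · exact mem_filter.2 ⟨mem_univ _, he'.2⟩
          · intro e _ e' _ h
            simp only [Sigma.mk.injEq, heq_eq_eq] at h
            funext i
            refine Fin.lastCases h.2 (fun i => congrFun h.1 i) i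
      _ ≤ (3 * r₀ * Δ) ^ r * (3 * r₀ * Δ) := by
          rw [card_sigma]
          refine (sum_le_card_nsmul _ _ (3 * r₀ * Δ) fun e _ => ?_).trans ?_
          · refine (hmeet _).trans ?_
            refine Nat.mul_le_mul_right _ ((card_reach _ _ _).trans ?_)
            exact Nat.mul_le_mul_left _ hr
          · rw [smul_eq_mul]
            exact Nat.mul_le_mul_right _ (ih (by omega))
      _ = _ := (pow_succ _ _).symm

end

/-! ### Long explorations are rare -/

section

variable {n : ℕ}

/-- The indicator that the formula `x` is satisfiable but not together with `c`. -/
noncomputable def kill {ι : Type*} (x : ι → EC3Clause n) (c : EC3Clause n) : ℝ :=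
  ne (sol x) - ne (sol x ∩ sat c)

theorem kill_nonneg {ι : Type*} (x : ι → EC3Clause n) (c : EC3Clause n) : 0 ≤ kill x c :=
  sub_nonneg.2 (ne_mono Set.inter_subset_left)

theorem kill_le_one {ι : Type*} (x : ι → EC3Clause n) (c : EC3Clause n) : kill x c ≤ 1 := by
  have h1 := ne_le_one (sol x)
  have h2 := ne_nonneg (sol x ∩ sat c)
  unfold kill; linarith

theorem sol_comp {ι : Type*} (π : Equiv.Perm ι) (x : ι → EC3Clause n) : sol (x ∘ π) = sol x := by
  ext σ
  simp only [sol, Set.mem_ofPred_eq, Function.comp_apply]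
  exact π.forall_congr_left.trans (by simp)

theorem deg_comp {ι : Type*} [Fintype ι] (π : Equiv.Perm ι) (x : ι → EC3Clause n) (v : Fin n) :
    deg (x ∘ π) v = deg x v := by
  unfold deg
  refine card_bijective π π.bijective fun i => ?_
  simp

/-- A symmetric weight does not distinguish the positions of a subsequence. -/
theorem expect_embedding_eq {ι : Type*} [Fintype ι] [DecidableEq ι] {r : ℕ}
    (F : (ι → EC3Clause n) → ℝ) (hF : ∀ (π : Equiv.Perm ι) x, F (x ∘ π) = F x)
    (φ : (Fin r → EC3Clause n) → ℝ) (e e' : Fin r ↪ ι) :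
    𝔼 x, F x * φ (x ∘ e) = 𝔼 x, F x * φ (x ∘ e') := by
  obtain ⟨π, hπ⟩ : ∃ π : Equiv.Perm ι, ∀ i, π (e i) = e' i := by
    have := Equiv.Perm.isMultiplyPretransitive ι r
    obtain ⟨π, hπ⟩ := MulAction.exists_smul_eq (Equiv.Perm ι) e e'
    exact ⟨π, fun i => by rw [← hπ]; rfl⟩
  refine (Fintype.expect_equiv (π.symm.arrowCongr (Equiv.refl _)) _ _ fun x => ?_).symm
  have h1 : (π.symm.arrowCongr (Equiv.refl (EC3Clause n))) x = x ∘ π := rfl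
  have h2 : (x ∘ π) ∘ e = x ∘ e' := by
    funext i; simp [hπ]
  rw [h1, hF, h2]

theorem expect_sum_elim {s j : ℕ} (φ : (Fin s ⊕ Fin j → EC3Clause n) → ℝ) :
    𝔼 x, φ x = 𝔼 y : Fin s → EC3Clause n, 𝔼 G : Fin j → EC3Clause n, φ (Sum.elim y G) := by
  rw [← Finset.expect_product' (f := fun y G => φ (Sum.elim y G)), univ_product_univ]
  exact (Fintype.expect_equiv (Equiv.sumArrowEquivProdArrow _ _ _).symm _ _ fun _ => rfl).symm

theorem sol_sum_elim {s j : ℕ} (y : Fin s → EC3Clause n) (G : Fin j → EC3Clause n) :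
    sol (Sum.elim y G) = sol y ∩ sol G := by
  ext σ; simp [sol]

/-- Some `r` distinct clauses of `y` form a connected sequence starting at `c`. -/
def Long {s : ℕ} (r : ℕ) (y : Fin s → EC3Clause n) (c : EC3Clause n) : Prop :=
  ∃ e : Fin r ↪ Fin s, Conn c r (y ∘ e)

theorem qd_eq_kill {s : ℕ} (j : ℕ) (y : Fin s → EC3Clause n) (c : EC3Clause n) :
    qd j y c = 𝔼 G : Fin j → EC3Clause n, kill (Sum.elim y G) c := by
  rw [qd_eq_expect]
  refine expect_congr rfl fun G _ => ?_
  rw [kill, sol_sum_elim, Set.inter_right_comm]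

/-- The mean influence of a random clause is the one-step drop of the satisfiability probability. -/
theorem expect_qd [Nonempty (EC3Clause n)] (s j : ℕ) :
    𝔼 y : Fin s → EC3Clause n, 𝔼 c : EC3Clause n, qd j y c
      = Psat n (s + j) - Psat n (s + j + 1) := by
  have h1 := expect_p s j (Set.univ : Set (Fin n → Bool))
  have h2 := expect_p s (j + 1) (Set.univ : Set (Fin n → Bool))
  simp only [Set.univ_inter] at h1 h2
  rw [Psat_eq, Psat_eq, add_assoc s j 1, ← h1, ← h2, ← expect_sub_distrib]
  refine expect_congr rfl fun y _ => ?_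
  simp only [qd]
  rw [expect_sub_distrib, Fintype.expect_const, p_succ]

/-- Clauses exposed early are unlikely to form long connected sequences around an influential
clause: by symmetry, among all sequences of `r` clauses connected to `c`, of which there are few
unless some variable has large degree, only a fraction `(s / M) ^ r` is exposed early. -/
theorem expect_long [Nonempty (EC3Clause n)] (s j r Δ : ℕ) (hr : r ≤ s + j) :
    𝔼 y : Fin s → EC3Clause n, 𝔼 c : EC3Clause n, qd j y c * ind (Long r y c)
      ≤ ((s : ℝ) * (3 * r * Δ) / (s + j + 1 - r : ℕ)) ^ r
          * (Psat n (s + j) - Psat n (s + j + 1))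
        + n * ((1 / 2) ^ Δ * Real.exp (3 * (s + j : ℕ) / n)) := by
  classical
  set E : ℝ := n * ((1 / 2) ^ Δ * Real.exp (3 * (s + j : ℕ) / n)) with hE
  set lam : ℝ := ((s : ℝ) * (3 * r * Δ) / (s + j + 1 - r : ℕ)) ^ r with hlam
  have hM : (0 : ℝ) < ((s + j + 1 - r : ℕ) : ℝ) := by
    exact_mod_cast (by omega : 0 < s + j + 1 - r)
  have key : ∀ c : EC3Clause n, 𝔼 y : Fin s → EC3Clause n, qd j y c * ind (Long r y c)
      ≤ lam * (𝔼 y : Fin s → EC3Clause n, qd j y c) + E := by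
    intro c
    set ι := Fin s ⊕ Fin j with hι
    set F : (ι → EC3Clause n) → ℝ := fun x => kill x c * ind (¬ ∃ v, Δ < deg x v) with hF
    have hF0 : ∀ x, 0 ≤ F x := fun x => mul_nonneg (kill_nonneg _ _) (ind_nonneg _)
    have hFsym : ∀ (π : Equiv.Perm ι) x, F (x ∘ π) = F x := by
      intro π x
      simp only [hF, kill, sol_comp π x, deg_comp π x]
    set φ : (Fin r → EC3Clause n) → ℝ := fun z => ind (Conn c r z) with hφ
    have e1 : 𝔼 y : Fin s → EC3Clause n, qd j y c * ind (Long r y c)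
        = 𝔼 x : ι → EC3Clause n, kill x c * ind (Long r (x ∘ Sum.inl) c) := by
      rw [expect_sum_elim]
      refine expect_congr rfl fun y _ => ?_
      rw [qd_eq_kill, expect_mul]
      rfl
    have e2 : 𝔼 y : Fin s → EC3Clause n, qd j y c = 𝔼 x : ι → EC3Clause n, kill x c := by
      rw [expect_sum_elim]
      exact expect_congr rfl fun y _ => qd_eq_kill j y c
    obtain ⟨e₀⟩ : Nonempty (Fin r ↪ ι) := by
      rw [Function.Embedding.nonempty_iff_card_le]; simpa [hι] using hr
    set w := 𝔼 x, F x * φ (x ∘ e₀) with hw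
    have hw0 : 0 ≤ w := expect_nonneg fun x _ => mul_nonneg (hF0 x) (ind_nonneg _)
    have hall : ∀ e : Fin r ↪ ι, 𝔼 x, F x * φ (x ∘ e) = w := fun e =>
      expect_embedding_eq F hFsym φ e e₀
    -- few connected sequences in total
    have h1 : ((s + j + 1 - r : ℕ) : ℝ) ^ r * w
        ≤ (3 * r * Δ : ℝ) ^ r * 𝔼 x : ι → EC3Clause n, kill x c := by
      calc ((s + j + 1 - r : ℕ) : ℝ) ^ r * w ≤ (Fintype.card (Fin r ↪ ι) : ℝ) * w := by
            refine mul_le_mul_of_nonneg_right ?_ hw0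
            rw [Fintype.card_embedding_eq]
            simp only [hι, Fintype.card_sum, Fintype.card_fin]
            exact_mod_cast Nat.pow_sub_le_descFactorial (s + j) r
        _ = ∑ e : Fin r ↪ ι, 𝔼 x, F x * φ (x ∘ e) := by
            rw [sum_congr rfl fun e _ => hall e]; simp
        _ = 𝔼 x, F x * ∑ e : Fin r ↪ ι, φ (x ∘ e) := by
            rw [← expect_sum_comm]; simp only [mul_sum]
        _ ≤ 𝔼 x : ι → EC3Clause n, (3 * r * Δ : ℝ) ^ r * kill x c := by
            refine expect_le_expect fun x _ => ?_
            by_cases hx : ∃ v, Δ < deg x v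
            · simp only [hF, ind_of_not (not_not.2 hx), mul_zero, zero_mul]
              exact mul_nonneg (by positivity) (kill_nonneg _ _)
            · simp only [hF, ind_of hx, mul_one]
              rw [mul_comm]
              refine mul_le_mul_of_nonneg_right ?_ (kill_nonneg _ _)
              push Not at hx
              have hc := card_conn_le c x hx (r₀ := r) r le_rfl
              have hc' : (((univ.filter fun e : Fin r → ι => Conn c r (x ∘ e)).card : ℕ) : ℝ)
                  ≤ (3 * r * Δ : ℝ) ^ r := by exact_mod_cast hc
              refine le_trans ?_ hc'
              rw [← sum_ind]
              simp only [hφ]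
              refine le_trans (le_of_eq ?_) (sum_le_sum_of_subset_of_nonneg
                (subset_univ ((univ : Finset (Fin r ↪ ι)).map
                  ⟨DFunLike.coe, DFunLike.coe_injective⟩))
                fun _ _ _ => ind_nonneg _)
              rw [sum_map]
              rfl
        _ = _ := (mul_expect _ _ _).symm
    have h2 : 𝔼 x : ι → EC3Clause n, F x * ind (Long r (x ∘ Sum.inl) c) ≤ (s : ℝ) ^ r * w := by
      calc _ ≤ 𝔼 x : ι → EC3Clause n, ∑ e : Fin r ↪ Fin s,
            F x * φ (x ∘ (e.trans Function.Embedding.inl : Fin r ↪ ι)) := by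
            refine expect_le_expect fun x _ => ?_
            rw [← mul_sum]
            exact mul_le_mul_of_nonneg_left (ind_exists_le _) (hF0 x)
        _ = (Fintype.card (Fin r ↪ Fin s) : ℝ) * w := by
            rw [expect_sum_comm, sum_congr rfl fun e _ => hall _]; simp
        _ ≤ _ := by
            refine mul_le_mul_of_nonneg_right ?_ hw0
            rw [Fintype.card_embedding_eq, Fintype.card_fin, Fintype.card_fin]
            exact_mod_cast Nat.descFactorial_le_pow s r
    have h3 : 𝔼 x : ι → EC3Clause n, kill x c * ind (Long r (x ∘ Sum.inl) c)
        ≤ 𝔼 x : ι → EC3Clause n, F x * ind (Long r (x ∘ Sum.inl) c) + E := by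
      have hdeg := expect_deg (n := n) (ι := ι) Δ
      simp only [hι, Fintype.card_sum, Fintype.card_fin] at hdeg
      refine le_trans ?_ (add_le_add_right hdeg _)
      rw [← expect_add_distrib]
      refine expect_le_expect fun x _ => ?_
      by_cases hx : ∃ v, Δ < deg x v
      · rw [ind_of hx]
        have a1 := mul_nonneg (hF0 x) (ind_nonneg (Long r (x ∘ Sum.inl) c))
        have a2 : kill x c * ind (Long r (x ∘ Sum.inl) c) ≤ 1 :=
          mul_le_one₀ (kill_le_one _ _) (ind_nonneg _) (ind_le_one _)
        linarith
      · rw [ind_of_not hx]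
        simp only [hF, ind_of hx, mul_one, add_zero]
        exact le_rfl
    have h4 : (s : ℝ) ^ r * w ≤ lam * 𝔼 x : ι → EC3Clause n, kill x c := by
      rw [hlam, div_pow, mul_pow, div_mul_eq_mul_div, le_div_iff₀ (by positivity)]
      have := mul_le_mul_of_nonneg_left h1 (by positivity : (0 : ℝ) ≤ (s : ℝ) ^ r)
      linarith
    rw [e1, e2]
    linarith
  rw [← expect_qd, expect_comm]
  calc _ ≤ 𝔼 c : EC3Clause n, (lam * (𝔼 y : Fin s → EC3Clause n, qd j y c) + E) :=
        expect_le_expect fun c _ => key c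
    _ = _ := by
        rw [expect_add_distrib, Fintype.expect_const, ← mul_expect, expect_comm]

end

/-! ### The squared influence of a random clause -/

section

variable {n s : ℕ}

/-- Exploring the component of `c` in `y` clause by clause either takes at least `r` steps or stops
at a set of at most `3 * (r + 1)` variables which no clause of `y` crosses. -/
theorem long_or_closed (y : Fin s → EC3Clause n) (c : EC3Clause n) (r : ℕ) :
    Long r y c ∨ ∃ A : Finset (Fin n), A.card ≤ 3 * (r + 1) ∧ c.1 ⊆ A ∧
      ∀ i, (y i).1 ⊆ A ∨ Disjoint (y i).1 A := by
  induction r with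
  | zero => exact Or.inl ⟨⟨Fin.elim0, fun i => i.elim0⟩, trivial⟩
  | succ r ih =>
    rcases ih with ⟨e, he⟩ | ⟨A, h1, h2, h3⟩
    · by_cases h : ∀ i, (y i).1 ⊆ reach c r (y ∘ e) ∨ Disjoint (y i).1 (reach c r (y ∘ e))
      · exact Or.inr ⟨_, (card_reach c r _).trans (by omega), subset_reach c r _, h⟩
      · push Not at h
        obtain ⟨i, hi1, hi2⟩ := h
        have hne : ∀ a, e a ≠ i := by
          rintro a rfl
          exact hi1 (subset_reach' c r (y ∘ e) a)
        refine Or.inl ⟨⟨Fin.snoc (α := fun _ => Fin s) e i, ?_⟩, ?_⟩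
        · intro a b
          refine Fin.lastCases ?_ (fun a => ?_) a <;> refine Fin.lastCases ?_ (fun b => ?_) b
          · simp
          · intro h
            simp only [Fin.snoc_last, Fin.snoc_castSucc] at h
            exact absurd h.symm (hne b)
          · intro h
            simp only [Fin.snoc_last, Fin.snoc_castSucc] at h
            exact absurd h (hne a)
          · intro h
            simp only [Fin.snoc_castSucc] at h
            rw [e.injective h]
        · refine ⟨?_, ?_⟩
          · change Conn c r fun a => y (Fin.snoc (α := fun _ => Fin s) e i a.castSucc)
            simp only [Fin.snoc_castSucc]
            exact he
          · change ¬ Disjoint (y (Fin.snoc (α := fun _ => Fin s) e i (Fin.last r))).1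
              (reach c r fun a => y (Fin.snoc (α := fun _ => Fin s) e i a.castSucc))
            simp only [Fin.snoc_castSucc, Fin.snoc_last]
            exact hi2
    · exact Or.inr ⟨A, h1.trans (by omega), h2, h3⟩

theorem Qd_of_empty (L j : ℕ) (y : Fin s → EC3Clause n) (c : EC3Clause n)
    (h : ¬ (sol y).Nonempty) : Qd L j y c = 0 := by
  rw [Set.not_nonempty_iff_eq_empty] at h
  simp [Qd, qd, h]

/-- A pair `(y, c)` with large influence has a long exploration or a tangled neighbourhood. -/
theorem Qd_sq_le [Nonempty (EC3Clause n)] {L r : ℕ} (hL : 0 < L) (j : ℕ)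
    (y : Fin s → EC3Clause n) (c : EC3Clause n) {ε : ℝ} (hε : 0 ≤ ε)
    (hs : 12 * s + 4 * (3 * (r + 1)) ≤ 3 * n)
    (hbig : ((3 * (r + 1) : ℕ) : ℝ) / L + 3 ^ (3 * (r + 1) + 1) / n
      < ((1 / 4 : ℝ) ^ (3 * (r + 1)) * ε) ^ 3 ^ (3 * (r + 1))) :
    Qd L j y c ^ 2 ≤ ε * Qd L j y c + Qd L j y c * ind (Long r y c)
      + ∑ i ∈ range (2 ^ (3 * (r + 1))), ind (Tangled i y c) := by
  have h0 := Qd_nonneg L j y c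
  have h1 := Qd_le_one hL j y c
  have hS : 0 ≤ ∑ i ∈ range (2 ^ (3 * (r + 1))), ind (Tangled i y c) :=
    sum_nonneg fun _ _ => ind_nonneg _
  have hεQ := mul_nonneg hε h0
  have hQL := mul_nonneg h0 (ind_nonneg (Long r y c))
  by_cases hy : (sol y).Nonempty
  swap
  · rw [Qd_of_empty L j y c hy]; simpa using hS
  rcases long_or_closed y c r with h | ⟨A, hA, hcA, hyA⟩
  · rw [ind_of h]; nlinarith
  by_cases ha : ∃ a, ClauseSat a c.1 ∧ ∀ i, (y i).1 ⊆ A → ClauseSat a (y i).1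
  · obtain ⟨a, ha1, ha2⟩ := ha
    have hg := Qd_good hL j y c ⟨A, a, hA, hcA, hyA, ha1, ha2⟩ hs
    have : Qd L j y c ≤ ε := by
      by_contra hlt
      push Not at hlt
      refine absurd (hg.trans_lt hbig) (not_lt.2 ?_)
      gcongr
    nlinarith
  · obtain ⟨i, hi, hT⟩ := tangled_of_unsat hy hA hcA ha
    have : 1 ≤ ∑ i ∈ range (2 ^ (3 * (r + 1))), ind (Tangled i y c) := by
      rw [← ind_of hT]
      exact single_le_sum (f := fun i => ind (Tangled i y c)) (fun _ _ => ind_nonneg _)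
        (mem_range.2 hi)
    nlinarith

theorem expect_drop_le [Nonempty (EC3Clause n)] {L : ℕ} (hL : 0 < L) (N : ℕ) :
    𝔼 l ∈ range L, (Psat n (N + l) - Psat n (N + l + 1)) ≤ 1 / L := by
  rw [expect_eq_sum_div_card, card_range]
  gcongr
  have := sum_shift_le (f := fun l => Psat n (N + l))
    (fun i => by rw [Psat_eq]; exact p_nonneg _ _)
    (fun i => by rw [Psat_eq]; exact p_le_one _ _) L 1
  simpa [add_assoc] using this

theorem expect_Qd_mul (L j : ℕ) (X : (Fin s → EC3Clause n) → EC3Clause n → ℝ) :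
    𝔼 y : Fin s → EC3Clause n, 𝔼 c : EC3Clause n, Qd L j y c * X y c
      = 𝔼 l ∈ range L, 𝔼 y : Fin s → EC3Clause n, 𝔼 c : EC3Clause n, qd (j + l) y c * X y c := by
  simp_rw [Qd, Finset.expect_mul (M := ℝ)]
  rw [Finset.expect_comm (range L) univ
    fun l y => 𝔼 c : EC3Clause n, qd (j + l) y c * X y c]
  exact Finset.expect_congr rfl fun y _ => Finset.expect_comm _ _ _

theorem expect_Qd_le [Nonempty (EC3Clause n)] {L : ℕ} (hL : 0 < L) (j : ℕ) :
    𝔼 y : Fin s → EC3Clause n, 𝔼 c : EC3Clause n, Qd L j y c ≤ 1 / L := by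
  have := expect_Qd_mul L j fun (_ : Fin s → EC3Clause n) _ => 1
  simp only [mul_one] at this
  rw [this]
  simp_rw [expect_qd, ← add_assoc]
  exact expect_drop_le hL (s + j)

theorem expect_Qd_long_le [Nonempty (EC3Clause n)] {L r : ℕ} (hL : 0 < L) (j Δ : ℕ)
    (hr : r ≤ s + j) :
    𝔼 y : Fin s → EC3Clause n, 𝔼 c : EC3Clause n, Qd L j y c * ind (Long r y c)
      ≤ ((s : ℝ) * (3 * r * Δ) / ((s + j + 1 - r : ℕ))) ^ r * (1 / L)
        + n * ((1 / 2) ^ Δ * Real.exp (3 * ((s + j + L : ℕ)) / n)) := by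
  rw [expect_Qd_mul]
  have hLne : (range L).Nonempty := by simpa using hL.ne'
  have hn : (0 : ℝ) < n := by have := three_le (n := n); positivity
  set lam : ℝ := ((s : ℝ) * (3 * r * Δ) / ((s + j + 1 - r : ℕ))) ^ r with hlam
  calc _ ≤ 𝔼 l ∈ range L, (lam * (Psat n (s + j + l) - Psat n (s + j + l + 1))
          + n * ((1 / 2) ^ Δ * Real.exp (3 * ((s + j + L : ℕ)) / n))) := by
        refine expect_le_expect fun l hl => ?_
        have h := expect_long (n := n) s (j + l) r Δ (by omega)
        rw [mem_range] at hl
        refine h.trans ?_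
        rw [← add_assoc]
        have hd : 0 ≤ Psat n (s + j + l) - Psat n (s + j + l + 1) := by
          rw [Psat_eq, Psat_eq, sub_nonneg]; exact p_succ_le _ _
        have h1 : (0:ℝ) < ((s + j + 1 - r : ℕ) : ℝ) := by
          have : 0 < s + j + 1 - r := by omega
          exact_mod_cast this
        have h2 : ((s : ℝ) * (3 * r * Δ) / ((s + j + l + 1 - r : ℕ))) ^ r ≤ lam := by
          have h3 : ((s + j + 1 - r : ℕ) : ℝ) ≤ ((s + j + l + 1 - r : ℕ) : ℝ) := by
            exact_mod_cast (by omega : s + j + 1 - r ≤ s + j + l + 1 - r)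
          rw [hlam]
          exact pow_le_pow_left₀ (by positivity)
            (div_le_div_of_nonneg_left (by positivity) h1 h3) r
        gcongr
    _ ≤ _ := by
        rw [expect_add_distrib, ← mul_expect, expect_const hLne]
        gcongr
        exact expect_drop_le hL (s + j)

/-- The mean squared influence of a random clause on `s` random clauses. -/
theorem expect_Qd_sq_le [Nonempty (EC3Clause n)] {L r : ℕ} (hL : 0 < L) (j Δ : ℕ) {ε : ℝ}
    (hε : 0 ≤ ε) (hr : r ≤ s + j) (hs : 12 * s + 4 * (3 * (r + 1)) ≤ 3 * n)
    (hbig : ((3 * (r + 1) : ℕ) : ℝ) / L + 3 ^ (3 * (r + 1) + 1) / n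
      < ((1 / 4 : ℝ) ^ (3 * (r + 1)) * ε) ^ 3 ^ (3 * (r + 1))) :
    𝔼 y : Fin s → EC3Clause n, 𝔼 c : EC3Clause n, Qd L j y c ^ 2
      ≤ ε / L + ((s : ℝ) * (3 * r * Δ) / ((s + j + 1 - r : ℕ))) ^ r * (1 / L)
        + n * ((1 / 2) ^ Δ * Real.exp (3 * ((s + j + L : ℕ)) / n))
        + (∑ i ∈ range (2 ^ (3 * (r + 1))), ((2 * i + 1 : ℕ) : ℝ) ^ (3 * (i + 1))) / n ^ 2 := by
  have hn : (0 : ℝ) < n := by have := three_le (n := n); positivity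
  have hsn : (s : ℝ) ≤ n := by
    have : s ≤ n := by omega
    exact_mod_cast this
  calc _ ≤ 𝔼 y : Fin s → EC3Clause n, 𝔼 c : EC3Clause n,
        (ε * Qd L j y c + Qd L j y c * ind (Long r y c)
          + ∑ i ∈ range (2 ^ (3 * (r + 1))), ind (Tangled i y c)) :=
        expect_le_expect fun y _ => expect_le_expect fun c _ => Qd_sq_le hL j y c hε hs hbig
    _ = ε * 𝔼 y : Fin s → EC3Clause n, 𝔼 c : EC3Clause n, Qd L j y c
        + 𝔼 y : Fin s → EC3Clause n, 𝔼 c : EC3Clause n, Qd L j y c * ind (Long r y c)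
        + ∑ i ∈ range (2 ^ (3 * (r + 1))),
          𝔼 y : Fin s → EC3Clause n, 𝔼 c : EC3Clause n, ind (Tangled i y c) := by
        simp_rw [expect_add_distrib, ← mul_expect, expect_sum_comm]
    _ ≤ ε * (1 / L) + (((s : ℝ) * (3 * r * Δ) / ((s + j + 1 - r : ℕ))) ^ r * (1 / L)
        + n * ((1 / 2) ^ Δ * Real.exp (3 * ((s + j + L : ℕ)) / n)))
        + ∑ i ∈ range (2 ^ (3 * (r + 1))), ((2 * i + 1 : ℕ) : ℝ) ^ (3 * (i + 1)) / n ^ 2 := by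
        gcongr with i hi
        · exact expect_Qd_le hL j
        · exact expect_Qd_long_le hL j Δ hr
        · refine (expect_tangled s i).trans ?_
          calc _ ≤ (n : ℝ) ^ i * n ^ (2 * i + 1) * (((2 * i + 1 : ℕ) : ℝ) / n) ^ (3 * (i + 1)) := by
                gcongr
            _ = _ := by
                rw [div_pow, ← pow_add, show 3 * (i + 1) = (i + (2 * i + 1)) + 2 by ring,
                  pow_add (n : ℝ) _ 2]
                field_simp
    _ = _ := by rw [sum_div]; ring

end

/-! ### Comparing lower and upper bounds for the variance after few exposures -/

section

variable {n : ℕ}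

/-- The exposure martingale of satisfiability of a random formula with `m` clauses, centred. -/
noncomputable def gm (n m s : ℕ) (S : Set (Fin n → Bool)) : ℝ := p (m - s) S - Psat n m

/-- The average of the martingales `gm` over the window `[m, m + L)`. -/
noncomputable def hm (n m L s : ℕ) (S : Set (Fin n → Bool)) : ℝ :=
  𝔼 l ∈ range L, (p (m - s + l) S - Psat n (m + l))

theorem p_mart [Nonempty (EC3Clause n)] (a : ℝ) (j : ℕ) (S : Set (Fin n → Bool)) :
    p (j + 1) S - a = 𝔼 c : EC3Clause n, (p j (S ∩ sat c) - a) := by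
  rw [expect_sub_distrib, Fintype.expect_const, p_succ]

theorem gm_mart [Nonempty (EC3Clause n)] {m s : ℕ} (h : s < m) : Mart (gm n m) s := by
  intro S
  obtain ⟨j, hj⟩ : ∃ j, m - s = j + 1 := ⟨m - s - 1, by omega⟩
  have hj' : m - (s + 1) = j := by omega
  simp only [gm, hj, hj']
  exact p_mart _ j S

theorem hm_mart [Nonempty (EC3Clause n)] {m s : ℕ} (L : ℕ) (h : s < m) : Mart (hm n m L) s := by
  intro S
  obtain ⟨j, hj⟩ : ∃ j, m - s = j + 1 := ⟨m - s - 1, by omega⟩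
  have hj' : m - (s + 1) = j := by omega
  simp only [hm, hj, hj']
  rw [Finset.expect_comm]
  refine Finset.expect_congr rfl fun l _ => ?_
  rw [show j + 1 + l = j + l + 1 by ring]
  exact p_mart _ _ S

theorem expect_p_univ (s j : ℕ) : 𝔼 x : Fin s → EC3Clause n, p j (sol x) = Psat n (s + j) := by
  have := expect_p (n := n) (s := s) (j := j) (S := Set.univ)
  simpa [Psat_eq] using this

theorem Psat_anti [Nonempty (EC3Clause n)] {a b : ℕ} (h : a ≤ b) : Psat n b ≤ Psat n a := by
  rw [Psat_eq, Psat_eq]; exact p_anti h _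

theorem Psat_nonneg (n m : ℕ) : 0 ≤ Psat n m := by rw [Psat_eq]; exact p_nonneg _ _

theorem Psat_le_one [Nonempty (EC3Clause n)] (m : ℕ) : Psat n m ≤ 1 := by
  rw [Psat_eq]; exact p_le_one _ _

theorem mom_gm_last [Nonempty (EC3Clause n)] (m : ℕ) :
    mom (gm n m) m = Psat n m * (1 - Psat n m) := by
  have h : ∀ x : Fin m → EC3Clause n, gm n m m (sol x) ^ 2
      = (1 - 2 * Psat n m) * p 0 (sol x) + Psat n m ^ 2 := by
    intro x
    have h0 : p 0 (sol x) ^ 2 = p 0 (sol x) := by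
      rw [p_zero]; unfold ne; split_ifs <;> norm_num
    rw [gm, Nat.sub_self]
    linear_combination h0
  rw [mom, Finset.expect_congr rfl fun x _ => h x, expect_add_distrib, ← mul_expect,
    Fintype.expect_const, expect_p_univ]
  simp only [add_zero]
  ring

/-- The last increment of the variance is at most the one-step drop of the satisfiability
probability. -/
theorem mom_gm_step [Nonempty (EC3Clause n)] (s : ℕ) :
    mom (gm n (s + 1)) (s + 1) - mom (gm n (s + 1)) s ≤ Psat n s - Psat n (s + 1) := by
  have h := mom_succ_sub_le (gm_mart (n := n) (Nat.lt_succ_self s))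
    fun S => p 0 S - Psat n (s + 1)
  refine h.trans ?_
  have e := expect_qd (n := n) s 0
  simp only [add_zero] at e
  rw [← e]
  refine expect_le_expect fun y _ => expect_le_expect fun c _ => ?_
  have h0 := qd_nonneg 0 y c
  have h1 := qd_le_one 0 y c
  have : p 0 (sol y) - Psat n (s + 1) - gm n (s + 1) (s + 1) (sol y ∩ sat c) = qd 0 y c := by
    rw [gm, Nat.sub_self, qd]; ring
  rw [this]
  nlinarith

/-- If the one-step drop at `m` is of order `1 / m`, then the variance after `t` exposures is at least
polynomial in `t / m`. -/
theorem mom_gm_lower [Nonempty (EC3Clause n)] {m k t : ℕ} {v : ℝ} (hv : 0 < v)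
    (hvm : v ≤ Psat n m * (1 - Psat n m)) (hk1 : 1 ≤ k)
    (hk : 2 * (m * (Psat n (m - 1) - Psat n m) / v) ≤ k) (hkt : k ≤ t) (htm : t ≤ m) :
    v * ((t : ℝ) / m) ^ k ≤ mom (gm n m) t := by
  obtain ⟨s, rfl⟩ : ∃ s, m = s + 1 := ⟨m - 1, by omega⟩
  simp only [Nat.add_sub_cancel] at hk
  have hA : v ≤ mom (gm n (s + 1)) (s + 1) := by rwa [mom_gm_last]
  have hd : 0 ≤ Psat n s - Psat n (s + 1) := sub_nonneg.2 (Psat_anti (Nat.le_succ s))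
  refine le_trans ?_ (poly_decay (A := mom (gm n (s + 1))) (hv.trans_le hA) hk hk1 ?_ ?_ hkt htm)
  · gcongr
  · intro i hi
    exact mom_logconvex (gm_mart (by omega)) (gm_mart (by omega))
  · simp only [Nat.add_sub_cancel]
    calc _ ≤ ((s + 1 : ℕ) : ℝ) * (Psat n s - Psat n (s + 1)) :=
          mul_le_mul_of_nonneg_left (mom_gm_step s) (by positivity)
      _ = ((s + 1 : ℕ) : ℝ) * (Psat n s - Psat n (s + 1)) / v * v := by field_simp
      _ ≤ _ := by gcongr

/-- The variance of the window-averaged martingale after `t` exposures is at most the sum of the mean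
squared influences of the exposed clauses. -/
theorem mom_hm_upper [Nonempty (EC3Clause n)] {m t L : ℕ} {E : ℝ} (htm : t ≤ m)
    (hE : ∀ s < t, 𝔼 y : Fin s → EC3Clause n, 𝔼 c : EC3Clause n, Qd L (m - s - 1) y c ^ 2 ≤ E) :
    mom (hm n m L) t ≤ t * E := by
  induction t with
  | zero =>
    have : ∀ x : Fin 0 → EC3Clause n, hm n m L 0 (sol x) = 0 := by
      intro x
      rw [sol_fin_zero, hm]
      simp [Psat_eq]
    simp [mom, this]
  | succ t ih =>
    have h1 := ih (by omega) fun s hs => hE s (by omega)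
    have h2 := mom_succ_sub_le (hm_mart (n := n) L (show t < m by omega))
      fun S => 𝔼 l ∈ range L, (p (m - t - 1 + l) S - Psat n (m + l))
    have h3 : 𝔼 y : Fin t → EC3Clause n, 𝔼 c : EC3Clause n,
        (𝔼 l ∈ range L, (p (m - t - 1 + l) (sol y) - Psat n (m + l))
          - hm n m L (t + 1) (sol y ∩ sat c)) ^ 2 ≤ E := by
      refine le_of_eq_of_le ?_ (hE t (by omega))
      refine Finset.expect_congr rfl fun y _ => Finset.expect_congr rfl fun c _ => ?_
      rw [hm, Qd, ← expect_sub_distrib, show m - (t + 1) = m - t - 1 by omega]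
      congr 1
      refine Finset.expect_congr rfl fun l _ => ?_
      rw [qd]; ring
    push_cast
    linarith

/-- Averaging the martingale over a window costs at most the drop over the window. -/
theorem mom_gm_le [Nonempty (EC3Clause n)] {m t L : ℕ} (htm : t ≤ m) (hL : 0 < L) :
    mom (gm n m) t ≤ 2 * mom (hm n m L) t + 4 * (Psat n m - Psat n (m + L)) := by
  have hLne : (range L).Nonempty := by simpa using hL.ne'
  set δ := Psat n m - Psat n (m + L) with hδ
  -- the loss from averaging over the window, which lies in `[0, 1]` and has mean at most `δ`
  set U : (Fin t → EC3Clause n) → ℝ := fun x =>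
    p (m - t) (sol x) - 𝔼 l ∈ range L, p (m - t + l) (sol x) with hU
  set W : ℝ := Psat n m - 𝔼 l ∈ range L, Psat n (m + l) with hW
  have hEU : 𝔼 x, U x = W := by
    rw [hU, expect_sub_distrib, Finset.expect_comm, expect_p_univ, hW]
    simp_rw [expect_p_univ]
    rw [show t + (m - t) = m by omega]
    congr 1
    refine Finset.expect_congr rfl fun l _ => ?_
    rw [show t + (m - t + l) = m + l by omega]
  have hW0 : 0 ≤ W := by
    rw [hW, sub_nonneg]
    exact expect_le hLne fun l _ => Psat_anti (Nat.le_add_right _ _)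
  have hWδ : W ≤ δ := by
    have : Psat n (m + L) ≤ 𝔼 l ∈ range L, Psat n (m + l) :=
      le_expect hLne fun l hl => Psat_anti (by rw [mem_range] at hl; omega)
    linarith
  have hW1 : W ≤ 1 := by
    have := Psat_le_one (n := n) m
    have : 0 ≤ 𝔼 l ∈ range L, Psat n (m + l) := expect_nonneg fun _ _ => Psat_nonneg _ _
    linarith
  have hU0 : ∀ x, 0 ≤ U x := fun x => sub_nonneg.2
    (expect_le hLne fun l _ => p_anti (Nat.le_add_right _ _) _)
  have hU1 : ∀ x, U x ≤ 1 := by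
    intro x
    have := p_le_one (m - t) (sol x)
    have : 0 ≤ 𝔼 l ∈ range L, p (m - t + l) (sol x) := expect_nonneg fun _ _ => p_nonneg _ _
    simp only [hU]; linarith
  have hpt : ∀ x : Fin t → EC3Clause n, gm n m t (sol x) ^ 2
      ≤ 2 * hm n m L t (sol x) ^ 2 + 2 * (U x + W) := by
    intro x
    have e : gm n m t (sol x) = hm n m L t (sol x) + (U x - W) := by
      rw [gm, hm, expect_sub_distrib]; simp only [hU, hW]; ring
    rw [e]
    have a0 := hU0 x
    have a1 := hU1 x
    have : (U x - W) ^ 2 ≤ U x + W := by nlinarith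
    nlinarith [sq_nonneg (hm n m L t (sol x) - (U x - W))]
  calc mom (gm n m) t ≤ 𝔼 x : Fin t → EC3Clause n, (2 * hm n m L t (sol x) ^ 2 + 2 * (U x + W)) :=
        expect_le_expect fun x _ => hpt x
    _ = 2 * mom (hm n m L) t + 2 * (W + W) := by
        rw [expect_add_distrib, ← mul_expect, ← mul_expect, expect_add_distrib, hEU,
          Fintype.expect_const, mom]
    _ ≤ _ := by linarith

/-- The combination of the variance bounds at a fixed number of clauses `m`. -/
theorem variance_sandwich [Nonempty (EC3Clause n)] {m k t L r Δ : ℕ} {v ε : ℝ} (hv : 0 < v)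
    (hvm : v ≤ Psat n m * (1 - Psat n m)) (hk1 : 1 ≤ k)
    (hk : 2 * (m * (Psat n (m - 1) - Psat n m) / v) ≤ k) (hkt : k ≤ t) (htm : t ≤ m)
    (hL : 0 < L) (hε : 0 ≤ ε) (hr : r < m) (hs : 12 * t + 4 * (3 * (r + 1)) ≤ 3 * n)
    (hbig : ((3 * (r + 1) : ℕ) : ℝ) / L + 3 ^ (3 * (r + 1) + 1) / n
      < ((1 / 4 : ℝ) ^ (3 * (r + 1)) * ε) ^ 3 ^ (3 * (r + 1))) :
    v * ((t : ℝ) / m) ^ k ≤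
      2 * (t * (ε / L + ((t : ℝ) * (3 * r * Δ) / ((m - r : ℕ))) ^ r * (1 / L)
        + n * ((1 / 2) ^ Δ * Real.exp (3 * ((m + L : ℕ)) / n))
        + (∑ i ∈ range (2 ^ (3 * (r + 1))), ((2 * i + 1 : ℕ) : ℝ) ^ (3 * (i + 1))) / n ^ 2))
      + 4 * (Psat n m - Psat n (m + L)) := by
  refine (mom_gm_lower hv hvm hk1 hk hkt htm).trans ((mom_gm_le htm hL).trans ?_)
  gcongr
  refine mom_hm_upper htm fun s hst => ?_
  have h := expect_Qd_sq_le (n := n) (s := s) hL (m - s - 1) Δ hε (r := r) (by omega) (by omega) hbig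
  rw [show s + (m - s - 1) + 1 - r = m - r by omega] at h
  refine h.trans ?_
  have h1 : s + (m - s - 1) + L ≤ m + L := by omega
  gcongr

/-- In a range of `R` values of `m`, some value has both a small one-step drop and a small drop over
the next `L` steps. -/
theorem exists_small_drop [Nonempty (EC3Clause n)] {R L : ℕ} (m₁ : ℕ) (hR : 0 < R) (hL : 0 < L) :
    ∃ m, m₁ < m ∧ m ≤ m₁ + R ∧ Psat n (m - 1) - Psat n m ≤ 2 / R ∧
      Psat n m - Psat n (m + L) ≤ 2 * L / R := by
  have hR' : (0 : ℝ) < R := by exact_mod_cast hR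
  have hL' : (0 : ℝ) < L := by exact_mod_cast hL
  have s1 := sum_shift_le (f := fun i => Psat n (m₁ + i)) (fun i => Psat_nonneg _ _)
    (fun i => Psat_le_one _) R 1
  have s2 := sum_shift_le (f := fun i => Psat n (m₁ + i + 1)) (fun i => Psat_nonneg _ _)
    (fun i => Psat_le_one _) R L
  have hsum : ∑ i ∈ range R, ((Psat n (m₁ + i) - Psat n (m₁ + (i + 1)))
      + (Psat n (m₁ + i + 1) - Psat n (m₁ + (i + L) + 1)) / L) ≤ ∑ i ∈ range R, (2 / R : ℝ) := by
    rw [sum_add_distrib, ← sum_div, sum_const, card_range, nsmul_eq_mul,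
      mul_div_cancel₀ _ hR'.ne']
    have : (∑ i ∈ range R, (Psat n (m₁ + i + 1) - Psat n (m₁ + (i + L) + 1))) / L ≤ 1 := by
      rw [div_le_one hL']; exact s2
    push_cast at s1
    linarith
  obtain ⟨i, hi, h⟩ := exists_le_of_sum_le (by simpa using hR.ne') hsum
  rw [mem_range] at hi
  have a1 : 0 ≤ Psat n (m₁ + i) - Psat n (m₁ + (i + 1)) := sub_nonneg.2 (Psat_anti (by omega))
  have a2 : 0 ≤ (Psat n (m₁ + i + 1) - Psat n (m₁ + (i + L) + 1)) / L :=
    div_nonneg (sub_nonneg.2 (Psat_anti (by omega))) hL'.le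
  refine ⟨m₁ + i + 1, by omega, by omega, ?_, ?_⟩
  · rw [Nat.add_sub_cancel, add_assoc]; linarith
  · have : (Psat n (m₁ + i + 1) - Psat n (m₁ + (i + L) + 1)) / L ≤ 2 / R := by linarith
    rw [div_le_iff₀ hL'] at this
    rw [show m₁ + i + 1 + L = m₁ + (i + L) + 1 by ring]
    refine this.trans (le_of_eq ?_)
    ring

end

/-! ### Choice of the parameters -/

/-- An integer `K`-th root `b` of `n`, up to a factor of two, satisfying any property that holds for
all large `b`. -/
theorem exists_root {K : ℕ} (hK : 1 ≤ K) {Q : ℕ → Prop} (hQ : ∀ᶠ b in atTop, Q b) :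
    ∀ᶠ n : ℕ in atTop, ∃ b, Q b ∧ b ^ K ≤ n ∧ n ≤ (2 * b) ^ K := by
  obtain ⟨B, hB⟩ := eventually_atTop.1 hQ
  filter_upwards [eventually_ge_atTop ((B + 1) ^ K)] with n hn
  have hP : (fun b => b ^ K ≤ n) (B + 1) := hn
  have hle : B + 1 ≤ n := (Nat.le_self_pow (by omega) (B + 1)).trans hn
  have h1 := Nat.findGreatest_spec (P := fun b => b ^ K ≤ n) hle hP
  have h2 := Nat.le_findGreatest (P := fun b => b ^ K ≤ n) hle hP
  set b := Nat.findGreatest (fun b => b ^ K ≤ n) n with hb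
  refine ⟨b, hB b (by omega), h1, ?_⟩
  by_contra h
  push Not at h
  have h3 : (b + 1) ^ K ≤ n := (Nat.pow_le_pow_left (by omega : b + 1 ≤ 2 * b) K).trans h.le
  have h4 := Nat.le_findGreatest (P := fun b => b ^ K ≤ n)
    ((Nat.le_self_pow (by omega) (b + 1)).trans h3) h3
  omega

/-- Taking the integer part of a real number `x ≥ 1` loses at most a factor of two. -/
theorem half_le_floor {x : ℝ} (hx : 1 ≤ x) : x / 2 ≤ (⌊x⌋₊ : ℝ) := by
  have h1 : (1 : ℝ) ≤ (⌊x⌋₊ : ℝ) := by exact_mod_cast Nat.one_le_floor_iff x |>.2 hx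
  have h2 := Nat.lt_floor_add_one x
  linarith

theorem eventually_exp_small (a c : ℕ) :
    ∀ᶠ b : ℕ in atTop, (2 * (b : ℝ)) ^ a * b ^ c * (1 / 2) ^ b ≤ 1 := by
  have h := tendsto_pow_const_mul_const_pow_of_lt_one (a + c) (r := (1 / 2 : ℝ))
    (by norm_num) (by norm_num)
  have h' := (h.const_mul ((2 : ℝ) ^ a))
  rw [mul_zero] at h'
  filter_upwards [h'.eventually_le_const (show (0 : ℝ) < 1 by norm_num)] with b hb
  calc _ = (2 : ℝ) ^ a * ((b : ℝ) ^ (a + c) * (1 / 2) ^ b) := by rw [mul_pow, pow_add]; ring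
    _ ≤ 1 := hb

theorem eventually_cast_ge (C : ℝ) : ∀ᶠ b : ℕ in atTop, C ≤ (b : ℝ) :=
  tendsto_natCast_atTop_atTop.eventually_ge_atTop C

set_option maxHeartbeats 2000000 in
/-- The satisfiability probability cannot stay between `α` and `1 - δ₀` on a range of clause numbers
of length proportional to `n`. -/
theorem eventually_boost {r r' α δ₀ : ℝ} (hr' : 0 < r') (hrr : r' < r) (hα : 0 < α)
    (hδ₀ : 0 < δ₀) :
    ∀ᶠ n : ℕ in atTop, α ≤ Psat n ⌊r * (n : ℝ)⌋₊ → 1 - δ₀ ≤ Psat n ⌊r' * (n : ℝ)⌋₊ := by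
  have hr : 0 < r := hr'.trans hrr
  set η : ℝ := (r - r') / 4 with hη
  have hη0 : 0 < η := by rw [hη]; linarith
  set v : ℝ := α * δ₀ with hvdef
  have hv : 0 < v := mul_pos hα hδ₀
  -- the exponent of the polynomial decay
  obtain ⟨k, hk1, hk⟩ : ∃ k : ℕ, 1 ≤ k ∧ 8 * r / (η * v) ≤ k := by
    obtain ⟨k, hk⟩ := exists_nat_ge (8 * r / (η * v))
    exact ⟨k + 1, by omega, hk.trans (by push_cast; linarith)⟩
  -- With `b ≈ n ^ (1 / K)`: `t ≈ n / b ^ 2` clauses are exposed, the window has length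
  -- `L ≈ n / b ^ q`, explorations are followed for `w` steps and so reach at most `κ` variables,
  -- degrees are cut off at `b`, and influences below `b ^ (-w)` are neglected. The choice of `w`
  -- makes `2 * q = 2 + w`, so that every error term is at most a constant times `b ^ (-q)`,
  -- whereas the lower bound is of order `b ^ (-2 * k)`. The size of `K` serves `hbig`.
  set q : ℕ := 2 * k + 1 with hq
  set w : ℕ := 4 * k with hw
  set κ : ℕ := 3 * (w + 1) with hκ
  set K : ℕ := q + (w * 3 ^ κ + 1) with hK
  set G : ℝ := ((1 / 4 : ℝ) ^ κ) ^ 3 ^ κ with hG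
  have hG0 : 0 < G := by positivity
  set C : ℝ := ∑ i ∈ range (2 ^ κ), ((2 * i + 1 : ℕ) : ℝ) ^ (3 * (i + 1)) with hC
  have hC0 : 0 ≤ C := sum_nonneg fun _ _ => by positivity
  set Λ : ℝ := 6 * w / r' with hΛ
  set T : ℝ := 4 + 4 * Λ ^ w + 2 * Real.exp (3 * r) + 2 * C + 16 / η with hT
  have hQ : ∀ᶠ b : ℕ in atTop, (2 * (b : ℝ)) ^ (2 * K) * b ^ q * (1 / 2) ^ b ≤ 1 ∧
      (2 * κ + 3 ^ (κ + 1)) / G + 1 ≤ (b : ℝ) ∧ T * (2 * r) ^ k / v + 1 ≤ (b : ℝ) ∧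
      2 * w / r' ≤ b ∧ 1 / r' ≤ b ∧ 1 / η ≤ b ∧ 2 * (k : ℝ) ≤ b ∧ 4 ≤ (b : ℝ) ∧
      8 * ((w : ℝ) + 1) ≤ b :=
    (eventually_exp_small _ _).and <| (eventually_cast_ge _).and <| (eventually_cast_ge _).and <|
      (eventually_cast_ge _).and <| (eventually_cast_ge _).and <| (eventually_cast_ge _).and <|
      (eventually_cast_ge _).and <| (eventually_cast_ge _).and (eventually_cast_ge _)
  filter_upwards [exists_root (K := K) (by omega) hQ] with n hn hαn
  obtain ⟨b, ⟨hb1, hb2, hb3, hb4, hb5, hb6, hb7, hb8, hb9⟩, hbn, hnb⟩ := hn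
  set β : ℝ := (b : ℝ) with hβ
  set x : ℝ := (n : ℝ) with hx
  have hβ0 : 0 < β := by linarith
  have hβ1 : 1 ≤ β := by linarith
  have hxK : β ^ K ≤ x := by rw [hβ, hx]; exact_mod_cast hbn
  have hxK2 : x ≤ (2 * β) ^ K := by rw [hβ, hx]; exact_mod_cast hnb
  have hβq : 0 < β ^ q := by positivity
  have hβqβ : β ^ q * β ≤ x := by
    refine le_trans ?_ hxK
    rw [← pow_succ]
    exact pow_le_pow_right₀ hβ1 (by omega)
  have hβleq : β ≤ β ^ q := le_self_pow₀ hβ1 (by omega)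
  have hβsq : β ^ 2 ≤ β ^ q := pow_le_pow_right₀ hβ1 (by omega)
  have hβqx : β ^ q ≤ x := (le_mul_of_one_le_right hβq.le hβ1).trans hβqβ
  have hβx : β ≤ x := hβleq.trans hβqx
  have hx0 : 0 < x := by linarith
  have hn3 : 3 ≤ n := by
    have : (3 : ℝ) ≤ n := by rw [← hx]; linarith
    exact_mod_cast this
  have := nonempty_clause hn3
  by_contra hcon
  push Not at hcon
  -- the parameters depending on `n`
  set t : ℕ := ⌊x / β ^ 2⌋₊ with ht
  set L : ℕ := ⌊x / β ^ q⌋₊ with hL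
  set R : ℕ := ⌊η * x⌋₊ with hR
  have hxq : β ≤ x / β ^ q := by rw [le_div_iff₀ hβq]; linarith
  have hx2 : β ≤ x / β ^ 2 := hxq.trans (by gcongr)
  have ht1 : (t : ℝ) ≤ x / β ^ 2 := Nat.floor_le (by positivity)
  have ht2 : x / β ^ 2 / 2 ≤ t := half_le_floor (hβ1.trans hx2)
  have hL1 : (L : ℝ) ≤ x / β ^ q := Nat.floor_le (by positivity)
  have hL2 : x / β ^ q / 2 ≤ L := half_le_floor (hβ1.trans hxq)
  have hηx : 1 ≤ η * x := by
    rw [div_le_iff₀ hη0, mul_comm] at hb6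
    exact hb6.trans (mul_le_mul_of_nonneg_left hβx hη0.le)
  have hR1 : (R : ℝ) ≤ η * x := Nat.floor_le (by positivity)
  have hR2 : η * x / 2 ≤ R := half_le_floor hηx
  have hL0 : (0 : ℝ) < L := lt_of_lt_of_le (by positivity) hL2
  have hR0 : (0 : ℝ) < R := lt_of_lt_of_le (by positivity) hR2
  have hLpos : 0 < L := by exact_mod_cast hL0
  obtain ⟨m, hm1, hm2, hD, hδ⟩ := exists_small_drop (n := n) (R := R) (L := L) ⌊r' * x⌋₊
    (by exact_mod_cast hR0) hLpos
  have hmr' : r' * x < m := by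
    refine (Nat.lt_floor_add_one (r' * x)).trans_le ?_
    exact_mod_cast hm1
  have hm2' : (m : ℝ) ≤ r' * x + η * x := by
    have h1 : (m : ℝ) ≤ (⌊r' * x⌋₊ : ℝ) + R := by exact_mod_cast hm2
    have h2 : (⌊r' * x⌋₊ : ℝ) ≤ r' * x := Nat.floor_le (by positivity)
    linarith
  have hrη : r' * x + 4 * (η * x) = r * x := by rw [hη]; ring
  have hLη : (L : ℝ) ≤ η * x := by
    refine hL1.trans ?_
    rw [div_le_iff₀ hβq]
    rw [div_le_iff₀ hη0, mul_comm] at hb6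
    have : 1 ≤ η * β ^ q := hb6.trans (mul_le_mul_of_nonneg_left hβleq hη0.le)
    calc x ≤ x * (η * β ^ q) := le_mul_of_one_le_right hx0.le this
      _ = η * x * β ^ q := by ring
  have hηx0 : 0 < η * x := by positivity
  have hmr : (m : ℝ) ≤ r * x := by linarith
  have hmL : ((m + L : ℕ) : ℝ) ≤ r * x := by push_cast; linarith
  have hm0 : (0 : ℝ) < m := lt_of_le_of_lt (by positivity) hmr'
  have hPα : α ≤ Psat n m := hαn.trans (Psat_anti (Nat.le_floor hmr))
  have hPδ : Psat n m ≤ 1 - δ₀ := (Psat_anti hm1.le).trans hcon.le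
  have hvm : v ≤ Psat n m * (1 - Psat n m) := by
    rw [hvdef]; exact mul_le_mul hPα (by linarith) hδ₀.le (hα.le.trans hPα)
  have hkm : 2 * (m * (Psat n (m - 1) - Psat n m) / v) ≤ k := by
    refine le_trans ?_ hk
    have h1 : Psat n (m - 1) - Psat n m ≤ 4 / (η * x) := by
      refine hD.trans ?_
      rw [div_le_div_iff₀ hR0 hηx0]; linarith
    have h0 : 0 ≤ Psat n (m - 1) - Psat n m := sub_nonneg.2 (Psat_anti (Nat.sub_le _ _))
    calc 2 * (m * (Psat n (m - 1) - Psat n m) / v) ≤ 2 * ((r * x) * (4 / (η * x)) / v) := by gcongr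
      _ = 8 * r / (η * v) := by field_simp; ring
  have hkt : k ≤ t := by
    have : (k : ℝ) ≤ t := by linarith
    exact_mod_cast this
  have htm : t ≤ m := by
    have : (t : ℝ) ≤ m := by
      refine ht1.trans (le_trans ?_ hmr'.le)
      rw [div_le_iff₀ (by positivity)]
      rw [div_le_iff₀ hr', mul_comm] at hb5
      have : 1 ≤ r' * β ^ 2 := hb5.trans
        (mul_le_mul_of_nonneg_left (le_self_pow₀ hβ1 two_ne_zero) hr'.le)
      calc x ≤ x * (r' * β ^ 2) := le_mul_of_one_le_right hx0.le this
        _ = r' * x * β ^ 2 := by ring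
    exact_mod_cast this
  have hwr : (w : ℝ) ≤ r' * x / 2 := by
    rw [div_le_iff₀ hr', mul_comm β] at hb4
    have := mul_le_mul_of_nonneg_left hβx hr'.le
    linarith
  have hwm : w < m := by
    have : (w : ℝ) < m := by
      have : 0 < r' * x := by positivity
      linarith
    exact_mod_cast this
  have hs : 12 * t + 4 * (3 * (w + 1)) ≤ 3 * n := by
    have h1 : (t : ℝ) ≤ x / 16 := by
      refine ht1.trans ?_
      gcongr
      calc (16 : ℝ) = 4 ^ 2 := by norm_num
        _ ≤ β ^ 2 := by gcongr
    have : (12 * t + 4 * (3 * (w + 1)) : ℝ) ≤ 3 * x := by linarith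
    rw [hx] at this
    exact_mod_cast this
  set ε : ℝ := 1 / β ^ w with hε
  have hinvL : 1 / (L : ℝ) ≤ 2 * β ^ q / x := by
    rw [div_le_div_iff₀ hL0 hx0]
    rw [div_div, div_le_iff₀ (by positivity)] at hL2
    linarith
  have hbig : ((κ : ℕ) : ℝ) / L + 3 ^ (κ + 1) / n < ((1 / 4 : ℝ) ^ κ * ε) ^ 3 ^ κ := by
    have e1 : ((1 / 4 : ℝ) ^ κ * ε) ^ 3 ^ κ = G / β ^ (w * 3 ^ κ) := by
      rw [mul_pow, ← hG, hε, div_pow, one_pow, ← pow_mul, mul_one_div]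
    have e2 : β ^ q / x ≤ 1 / (β ^ (w * 3 ^ κ) * β) := by
      rw [div_le_div_iff₀ hx0 (by positivity), one_mul, ← pow_succ, ← pow_add]
      exact hxK
    rw [e1]
    calc ((κ : ℕ) : ℝ) / L + 3 ^ (κ + 1) / n = κ * (1 / (L : ℝ)) + 3 ^ (κ + 1) * (1 / x) := by
          rw [← hx]; ring
      _ ≤ κ * (2 * β ^ q / x) + 3 ^ (κ + 1) * (β ^ q / x) := by
          gcongr; linarith
      _ = (2 * κ + 3 ^ (κ + 1)) * (β ^ q / x) := by ring
      _ ≤ (2 * κ + 3 ^ (κ + 1)) * (1 / (β ^ (w * 3 ^ κ) * β)) := by gcongr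
      _ < G / β ^ (w * 3 ^ κ) := by
          rw [mul_one_div, div_lt_div_iff₀ (by positivity) (by positivity)]
          have h1 : (2 * κ + 3 ^ (κ + 1)) / G < β := by linarith
          rw [div_lt_iff₀ hG0] at h1
          have h2 : 0 < β ^ (w * 3 ^ κ) := by positivity
          calc _ < β * G * β ^ (w * 3 ^ κ) := mul_lt_mul_of_pos_right h1 h2
            _ = _ := by ring
  have key := variance_sandwich (n := n) (m := m) (k := k) (t := t) (L := L) (r := w) (Δ := b)
    (v := v) (ε := ε) hv hvm hk1 hkm hkt htm hLpos (by positivity) hwm hs hbig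
  have hlow : v / (2 * r) ^ k / β ^ (2 * k) ≤ v * ((t : ℝ) / m) ^ k := by
    have h1 : 1 / (2 * r * β ^ 2) ≤ (t : ℝ) / m := by
      rw [div_le_div_iff₀ (by positivity) hm0]
      rw [div_div, div_le_iff₀ (by positivity)] at ht2
      have := mul_le_mul_of_nonneg_left ht2 hr.le
      linarith
    calc v / (2 * r) ^ k / β ^ (2 * k) = v * (1 / (2 * r * β ^ 2)) ^ k := by
          rw [div_pow, one_pow, mul_pow (2 * r), ← pow_mul, div_div, mul_one_div]
      _ ≤ _ := by gcongr
  have htL : (t : ℝ) * (1 / L) ≤ 2 * β ^ q / β ^ 2 := by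
    calc (t : ℝ) * (1 / L) ≤ x / β ^ 2 * (2 * β ^ q / x) := by gcongr
      _ = _ := by field_simp
  have hpow : β ^ q * β ^ q = β ^ 2 * β ^ w := by
    rw [← pow_add, ← pow_add]; congr 1; omega
  have hA : 2 * ((t : ℝ) * (ε / L)) ≤ 4 / β ^ q := by
    calc 2 * ((t : ℝ) * (ε / L)) = 2 * ε * (t * (1 / L)) := by ring
      _ ≤ 2 * ε * (2 * β ^ q / β ^ 2) := by gcongr
      _ = 4 * (β ^ q * β ^ q) / (β ^ 2 * β ^ w) / β ^ q := by rw [hε]; field_simp; ring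
      _ = 4 / β ^ q := by rw [hpow]; field_simp
  have hB : 2 * ((t : ℝ) * (((t : ℝ) * (3 * w * b) / ((m - w : ℕ))) ^ w * (1 / L)))
      ≤ 4 * Λ ^ w / β ^ q := by
    have hmw : r' * x / 2 ≤ ((m - w : ℕ) : ℝ) := by
      rw [Nat.cast_sub hwm.le]; linarith
    have h1 : (t : ℝ) * (3 * w * b) / ((m - w : ℕ)) ≤ Λ / β := by
      calc (t : ℝ) * (3 * w * b) / ((m - w : ℕ)) ≤ x / β ^ 2 * (3 * w * β) / (r' * x / 2) := by
            gcongr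
        _ = Λ / β := by rw [hΛ]; field_simp; ring
    calc _ = 2 * ((t : ℝ) * (3 * w * b) / ((m - w : ℕ))) ^ w * (t * (1 / L)) := by ring
      _ ≤ 2 * (Λ / β) ^ w * (2 * β ^ q / β ^ 2) := by gcongr
      _ = 4 * Λ ^ w * (β ^ q * β ^ q) / (β ^ 2 * β ^ w) / β ^ q := by
          rw [div_pow]; field_simp; ring
      _ = 4 * Λ ^ w / β ^ q := by rw [hpow]; field_simp
  have htx : (t : ℝ) ≤ x := ht1.trans (div_le_self hx0.le (one_le_pow₀ hβ1))
  have hCc : 2 * ((t : ℝ) * (n * ((1 / 2) ^ b * Real.exp (3 * ((m + L : ℕ)) / n))))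
      ≤ 2 * Real.exp (3 * r) / β ^ q := by
    have h1 : 3 * ((m + L : ℕ) : ℝ) / n ≤ 3 * r := by
      rw [← hx, div_le_iff₀ hx0]; linarith
    have h2 : x * x * (1 / 2) ^ b ≤ 1 / β ^ q := by
      rw [le_div_iff₀ hβq]
      calc x * x * (1 / 2) ^ b * β ^ q ≤ (2 * β) ^ K * (2 * β) ^ K * (1 / 2) ^ b * β ^ q := by
            gcongr
        _ = (2 * β) ^ (2 * K) * β ^ q * (1 / 2) ^ b := by ring
        _ ≤ 1 := hb1
    calc _ ≤ 2 * (x * (x * ((1 / 2) ^ b * Real.exp (3 * r)))) := by rw [← hx]; gcongr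
      _ = 2 * Real.exp (3 * r) * (x * x * (1 / 2) ^ b) := by ring
      _ ≤ 2 * Real.exp (3 * r) * (1 / β ^ q) := by gcongr
      _ = _ := by ring
  have hDd : 2 * ((t : ℝ) * (C / (n : ℝ) ^ 2)) ≤ 2 * C / β ^ q := by
    calc _ ≤ 2 * (x * (C / x ^ 2)) := by rw [← hx]; gcongr
      _ = 2 * C / x := by field_simp
      _ ≤ 2 * C / β ^ q := by gcongr
  have hEe : 4 * (Psat n m - Psat n (m + L)) ≤ 16 / η / β ^ q := by
    calc _ ≤ 4 * (2 * (L : ℝ) / R) := by gcongr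
      _ ≤ 4 * (2 * (x / β ^ q) / (η * x / 2)) := by gcongr
      _ = _ := by field_simp; ring
  have hfin : v / (2 * r) ^ k / β ^ (2 * k) ≤ T / β ^ q := by
    refine hlow.trans (key.trans ?_)
    rw [hT, add_div, add_div, add_div, add_div]
    linarith
  rw [div_le_div_iff₀ (by positivity) hβq, hq, pow_succ] at hfin
  have hβk : 0 < β ^ (2 * k) := by positivity
  have h1 : v / (2 * r) ^ k * β ≤ T := by
    refine le_of_mul_le_mul_right ?_ hβk
    linarith
  rw [div_mul_eq_mul_div, div_le_iff₀ (by positivity)] at h1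
  have h2 : T * (2 * r) ^ k / v < β := by linarith
  rw [div_lt_iff₀ hv] at h2
  linarith

end EC3

/-- Given a non-uniform threshold function `r*(n)` in the sense of Friedgut:
for every `ε > 0`, densities `ρ` with `ρ ≤ (1-ε) r*(n)` for all large `n` are
satisfiable w.h.p., and densities with `ρ ≥ (1+ε) r*(n)` for all large `n` are
unsatisfiable w.h.p.  If the satisfiability probability at some fixed density
`r > 0` has positive liminf, then at every fixed density `r' < r` the
satisfiability probability tends to 1. -/
theorem ec3_nonuniform_threshold_boost (rstar : ℕ → ℝ) (hpos : ∀ n, 0 < rstar n)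
    (hbelow : ∀ ε : ℝ, 0 < ε → ∀ ρ : ℝ,
      (∀ᶠ n : ℕ in atTop, ρ ≤ (1 - ε) * rstar n) →
      Tendsto (fun n : ℕ => Psat n ⌊ρ * (n : ℝ)⌋₊) atTop (𝓝 1))
    (habove : ∀ ε : ℝ, 0 < ε → ∀ ρ : ℝ,
      (∀ᶠ n : ℕ in atTop, (1 + ε) * rstar n ≤ ρ) →
      Tendsto (fun n : ℕ => Psat n ⌊ρ * (n : ℝ)⌋₊) atTop (𝓝 0))
    (r : ℝ) (hr : 0 < r)
    (hliminf : 0 < Filter.liminf (fun n : ℕ => Psat n ⌊r * (n : ℝ)⌋₊) atTop)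
    (r' : ℝ) (hr' : 0 < r') (hr'r : r' < r) :
    Tendsto (fun n : ℕ => Psat n ⌊r' * (n : ℝ)⌋₊) atTop (𝓝 1) := by
  have hα : ∀ᶠ n : ℕ in atTop,
      Filter.liminf (fun n : ℕ => Psat n ⌊r * (n : ℝ)⌋₊) atTop / 2 < Psat n ⌊r * (n : ℝ)⌋₊ :=
    eventually_lt_of_lt_liminf (half_lt_self hliminf)
      ⟨0, Filter.eventually_map.2 (Eventually.of_forall fun n => EC3.Psat_nonneg _ _)⟩
  rw [tendsto_order]
  refine ⟨fun a ha => ?_, fun a ha => ?_⟩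
  · filter_upwards [hα, EC3.eventually_boost hr' hr'r (half_pos hliminf)
      (show 0 < (1 - a) / 2 by linarith)] with n h1 h2
    have := h2 h1.le
    linarith
  · filter_upwards [eventually_ge_atTop 3] with n hn
    have := EC3.nonempty_clause hn
    exact (EC3.Psat_le_one _).trans_lt ha
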